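/- arXiv:1701.07963 — 10 statements merged into one kernel-verified Lean document; each statement's English description precedes it below -/
import Mathlib

section
/- Harary's Balance Theorem (bipartition form): A signed graph Σ is balanced if and only if there is a bipartition of its vertex set V = X ∪ Y (one of X, Y possibly empty) such that every positive edge has both endpoints in X or both in Y, while every negative edge has one endpoint in X and one in Y. -/
/-- The sign of a walk in a signed graph: the product of the signs of its edges. -/
def walkSign {V : Type*} (G : SimpleGraph V) (σ : Sym2 V → ℤˣ) {u v : V}
    (w : G.Walk u v) : ℤˣ :=
  (w.edges.map σ).prod

/-- A signed graph is balanced if every circle (cycle) is positive. -/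
def sgBalanced {V : Type*} (G : SimpleGraph V) (σ : Sym2 V → ℤˣ) : Prop :=
  ∀ ⦃v : V⦄ (w : G.Walk v v), w.IsCycle → walkSign G σ w = 1

theorem walkSign_cons {V : Type*} (G : SimpleGraph V) (σ : Sym2 V → ℤˣ) {u v w : V}
    (h : G.Adj u v) (p : G.Walk v w) :
    walkSign G σ (SimpleGraph.Walk.cons h p) = σ s(u, v) * walkSign G σ p := by
  simp [walkSign]

theorem walkSign_append {V : Type*} (G : SimpleGraph V) (σ : Sym2 V → ℤˣ) {u v w : V}
    (p : G.Walk u v) (q : G.Walk v w) :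
    walkSign G σ (p.append q) = walkSign G σ p * walkSign G σ q := by
  simp [walkSign, SimpleGraph.Walk.edges_append]

theorem walkSign_reverse {V : Type*} (G : SimpleGraph V) (σ : Sym2 V → ℤˣ) {u v : V}
    (p : G.Walk u v) : walkSign G σ p.reverse = walkSign G σ p := by
  simp [walkSign, SimpleGraph.Walk.edges_reverse, List.prod_reverse]

/-- In a balanced graph, closing up a path by an edge gives a positive closed walk. -/
theorem walkSign_close {V : Type*} (G : SimpleGraph V) (σ : Sym2 V → ℤˣ)
    (hb : sgBalanced G σ) {u v : V} (h : G.Adj u v) (q : G.Walk v u) (hq : q.IsPath) :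
    σ s(u, v) * walkSign G σ q = 1 := by
  by_cases he : s(u, v) ∈ q.edges
  · cases q with
    | nil => simp at he
    | @cons _ x _ h' q' =>
      rw [SimpleGraph.Walk.cons_isPath_iff] at hq
      rw [SimpleGraph.Walk.edges_cons, List.mem_cons] at he
      rcases he with he | he
      · have hx : x = u := by
          rw [Sym2.eq_swap, Sym2.congr_right] at he
          exact he.symm
        subst hx
        have hn : q' = SimpleGraph.Walk.nil := SimpleGraph.Walk.isPath_iff_eq_nil.1 hq.1
        subst hn
        rw [walkSign_cons, he]
        simp [walkSign]
      · exact absurd (q'.snd_mem_support_of_mem_edges he) hq.2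
  · rw [← walkSign_cons G σ h q]
    exact hb _ ((SimpleGraph.Walk.cons_isCycle_iff q h).2 ⟨hq, he⟩)

open Classical in
theorem walkSign_bypass {V : Type*} (G : SimpleGraph V) (σ : Sym2 V → ℤˣ)
    (hb : sgBalanced G σ) {u v : V} (p : G.Walk u v) :
    walkSign G σ p.bypass = walkSign G σ p := by
  induction p with
  | nil => rfl
  | @cons u v w h p ih =>
    rw [walkSign_cons, ← ih, SimpleGraph.Walk.bypass]
    by_cases hs : u ∈ p.bypass.support
    · simp only [hs, dite_true]
      have h1 := walkSign_close G σ hb h (p.bypass.takeUntil u hs)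
        (p.bypass_isPath.takeUntil hs)
      conv_rhs => rw [← p.bypass.take_spec hs]
      rw [walkSign_append, ← mul_assoc, h1, one_mul]
    · simp only [hs, dite_false]
      rw [walkSign_cons]

theorem walkSign_closed {V : Type*} (G : SimpleGraph V) (σ : Sym2 V → ℤˣ)
    (hb : sgBalanced G σ) {u : V} (p : G.Walk u u) : walkSign G σ p = 1 := by
  classical
  rw [← walkSign_bypass G σ hb p,
    SimpleGraph.Walk.isPath_iff_eq_nil.1 p.bypass_isPath]
  simp [walkSign]

/-- Harary's Balance Theorem (bipartition form): a signed graph is balanced iff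
there is a bipartition `{X, Xᶜ}` of the vertex set (one side possibly empty) such that
an edge is positive exactly when both of its endpoints lie on the same side. -/
theorem harary_balance_bipartition {V : Type*} [Fintype V]
    (G : SimpleGraph V) (σ : Sym2 V → ℤˣ) :
    sgBalanced G σ ↔
      ∃ X : Set V, ∀ u v : V, G.Adj u v → (σ s(u, v) = 1 ↔ (u ∈ X ↔ v ∈ X)) := by
  constructor
  · intro hb
    have hr : ∀ v : V, G.Reachable (G.connectedComponentMk v).out v := fun v =>
      SimpleGraph.ConnectedComponent.exact (Quot.out_eq _)
    have key : ∀ (r : V) (u v : V) (h : G.Adj u v) (p : G.Walk r u) (q : G.Walk r v),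
        σ s(u, v) = walkSign G σ p * walkSign G σ q := by
      intro r u v h p q
      have := walkSign_closed G σ hb (p.append (SimpleGraph.Walk.cons h q.reverse))
      rw [walkSign_append, walkSign_cons, walkSign_reverse] at this
      rcases Int.units_eq_one_or (σ s(u, v)) with h1 | h1 <;>
      rcases Int.units_eq_one_or (walkSign G σ p) with h2 | h2 <;>
      rcases Int.units_eq_one_or (walkSign G σ q) with h3 | h3 <;>
      simp_all
    refine ⟨{v | ∃ p : G.Walk (G.connectedComponentMk v).out v, walkSign G σ p = 1}, ?_⟩
    intro u v h
    have hc : G.connectedComponentMk u = G.connectedComponentMk v :=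
      SimpleGraph.ConnectedComponent.sound h.reachable
    obtain ⟨p0⟩ := hr u
    obtain ⟨q0⟩ := hr v
    simp only [Set.mem_ofPred_eq]
    rw [hc] at p0 ⊢
    generalize (G.connectedComponentMk v).out = r at p0 q0 ⊢
    constructor
    · intro hs
      have e : ∀ (p : G.Walk r u) (q : G.Walk r v), walkSign G σ p = walkSign G σ q := by
        intro p q
        have := key r u v h p q
        rw [hs] at this
        rw [← Int.units_inv_eq_self (walkSign G σ q)]
        exact eq_inv_of_mul_eq_one_left this.symm
      exact ⟨fun ⟨p, hp⟩ => ⟨q0, by rw [← e p q0, hp]⟩, fun ⟨q, hq⟩ => ⟨p0, by rw [e p0 q, hq]⟩⟩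
    · intro hi
      rcases Int.units_eq_one_or (walkSign G σ p0) with h2 | h2
      · obtain ⟨q, hq⟩ := hi.1 ⟨p0, h2⟩
        rw [key r u v h p0 q, h2, hq, one_mul]
      · rcases Int.units_eq_one_or (walkSign G σ q0) with h3 | h3
        · obtain ⟨p, hp⟩ := hi.2 ⟨q0, h3⟩
          rw [key r u v h p q0, hp, h3, one_mul]
        · rw [key r u v h p0 q0, h2, h3]
          rfl
  · rintro ⟨X, hX⟩
    have key : ∀ (u v : V) (p : G.Walk u v), walkSign G σ p = 1 ↔ (u ∈ X ↔ v ∈ X) := by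
      intro u v p
      induction p with
      | nil => simp [walkSign]
      | @cons u v w h p ih =>
        rw [walkSign_cons]
        have h1 := hX u v h
        have hne : (-1 : ℤˣ) ≠ 1 := by decide
        rcases Int.units_eq_one_or (σ s(u, v)) with h2 | h2 <;>
        rcases Int.units_eq_one_or (walkSign G σ p) with h3 | h3 <;>
        rw [h2] at h1 ⊢ <;> rw [h3] at ih ⊢ <;> simp [hne] at h1 ih ⊢ <;> tauto
    intro v w _
    exact (key v v w).2 Iff.rfl
end

section
/- Let Σ and Σ′ be two signed graphs with the same underlying graph Γ. Then Σ and Σ′ have exactly the same set of positive circles if and only if Σ′ is obtained from Σ by switching, i.e. Σ′ = Σ^ζ for some function ζ : V → {+1, −1}. -/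
/-- The signature obtained from `σ` by switching with `ζ : V → ℤˣ`:
`σ^ζ(uv) = ζ(u) σ(uv) ζ(v)`. -/
def sgSwitch {V : Type*} (σ : Sym2 V → ℤˣ) (ζ : V → ℤˣ) (e : Sym2 V) : ℤˣ :=
  Sym2.lift ⟨fun u v => ζ u * ζ v, fun u v => mul_comm (ζ u) (ζ v)⟩ e * σ e

section helpers
variable {V : Type*} {G : SimpleGraph V}

lemma ws_cons (τ : Sym2 V → ℤˣ) {u v w : V} (h : G.Adj u v) (p : G.Walk v w) :
    walkSign G τ (SimpleGraph.Walk.cons h p) = τ s(u, v) * walkSign G τ p := by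
  simp [walkSign]

lemma ws_append (τ : Sym2 V → ℤˣ) {u v w : V} (p : G.Walk u v) (q : G.Walk v w) :
    walkSign G τ (p.append q) = walkSign G τ p * walkSign G τ q := by
  simp [walkSign]

lemma ws_reverse (τ : Sym2 V → ℤˣ) {u v : V} (p : G.Walk u v) :
    walkSign G τ p.reverse = walkSign G τ p := by
  simp [walkSign, List.prod_reverse]

lemma ws_mul (σ σ' : Sym2 V → ℤˣ) {u v : V} (p : G.Walk u v) :
    walkSign G (fun e => σ e * σ' e) p = walkSign G σ p * walkSign G σ' p := by
  simp [walkSign, List.prod_map_mul]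

lemma ws_closing (τ : Sym2 V → ℤˣ)
    (hc : ∀ ⦃v : V⦄ (w : G.Walk v v), w.IsCycle → walkSign G τ w = 1)
    {u v : V} (h : G.Adj u v) (p : G.Walk v u) (hp : p.IsPath) :
    τ s(u, v) * walkSign G τ p = 1 := by
  by_cases he : s(u, v) ∈ p.edges
  · cases p with
    | nil => exact absurd h (G.loopless.irrefl _)
    | @cons _ x _ h' q =>
      rw [SimpleGraph.Walk.cons_isPath_iff] at hp
      rw [SimpleGraph.Walk.edges_cons, List.mem_cons] at he
      rcases he with he | he
      · have hx : x = u := by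
          rw [Sym2.eq_iff] at he
          rcases he with ⟨a, b⟩ | ⟨a, b⟩
          · exact absurd a h.ne
          · exact a.symm
        subst hx
        have := SimpleGraph.Walk.isPath_iff_eq_nil.1 hp.1
        subst this
        rw [ws_cons, Sym2.eq_swap]
        simp [walkSign, Int.units_mul_self]
      · exact absurd (q.snd_mem_support_of_mem_edges he) hp.2
  · rw [← ws_cons τ h p]
    exact hc _ ((SimpleGraph.Walk.cons_isCycle_iff p h).2 ⟨hp, he⟩)

lemma ws_path (τ : Sym2 V → ℤˣ)
    (hc : ∀ ⦃v : V⦄ (w : G.Walk v v), w.IsCycle → walkSign G τ w = 1)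
    {u v : V} (p : G.Walk u v) :
    ∃ q : G.Walk u v, q.IsPath ∧ walkSign G τ q = walkSign G τ p := by
  classical
  induction p with
  | nil => exact ⟨_, SimpleGraph.Walk.IsPath.nil, rfl⟩
  | @cons u v w h p ih =>
    obtain ⟨q, hq, hs⟩ := ih
    by_cases hu : u ∈ q.support
    · refine ⟨q.dropUntil u hu, hq.dropUntil hu, ?_⟩
      have h1 := ws_closing τ hc h (q.takeUntil u hu) (hq.takeUntil hu)
      have h2 := ws_append τ (q.takeUntil u hu) (q.dropUntil u hu)
      rw [SimpleGraph.Walk.take_spec] at h2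
      rw [ws_cons, ← hs, h2, ← mul_assoc, h1, one_mul]
    · exact ⟨SimpleGraph.Walk.cons h q, hq.cons hu, by rw [ws_cons, ws_cons, hs]⟩

lemma ws_closed (τ : Sym2 V → ℤˣ)
    (hc : ∀ ⦃v : V⦄ (w : G.Walk v v), w.IsCycle → walkSign G τ w = 1)
    {u : V} (p : G.Walk u u) : walkSign G τ p = 1 := by
  obtain ⟨q, hq, hs⟩ := ws_path τ hc p
  have := SimpleGraph.Walk.isPath_iff_eq_nil.1 hq
  subst this
  rw [← hs]
  simp [walkSign]

lemma ws_switch (σ σ' : Sym2 V → ℤˣ) (ζ : V → ℤˣ)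
    (h : ∀ e ∈ G.edgeSet, σ' e = sgSwitch σ ζ e) {u v : V} (p : G.Walk u v) :
    walkSign G σ' p = ζ u * ζ v * walkSign G σ p := by
  induction p with
  | nil => simp [walkSign, Int.units_mul_self]
  | @cons u v w ha p ih =>
    rw [ws_cons, ws_cons, ih, h _ ha]
    have : ζ v * ζ v = 1 := Int.units_mul_self _
    calc _ = (ζ v * ζ v) * (ζ u * ζ w * (σ s(u, v) * walkSign G σ p)) := by
          simp only [sgSwitch, Sym2.lift_mk]; ac_rfl
      _ = _ := by rw [this, one_mul]

end helpers

/-- Two signatures on the same underlying graph have the same positive circles iff one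
is obtained from the other by switching. -/
theorem same_positive_circles_iff_switching {V : Type*} [Fintype V]
    (G : SimpleGraph V) (σ σ' : Sym2 V → ℤˣ) :
    (∀ ⦃v : V⦄ (w : G.Walk v v), w.IsCycle →
        (walkSign G σ w = 1 ↔ walkSign G σ' w = 1)) ↔
      ∃ ζ : V → ℤˣ, ∀ e ∈ G.edgeSet, σ' e = sgSwitch σ ζ e := by
  constructor
  · intro H
    have hc : ∀ ⦃v : V⦄ (w : G.Walk v v), w.IsCycle →
        walkSign G (fun e => σ e * σ' e) w = 1 := by
      intro v w hw
      have := H w hw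
      rw [ws_mul]
      rcases Int.units_eq_one_or (walkSign G σ w) with a | a <;>
        rcases Int.units_eq_one_or (walkSign G σ' w) with b | b <;> simp_all
    have hr : ∀ v : V, G.Reachable (G.connectedComponentMk v).out v := fun v =>
      SimpleGraph.ConnectedComponent.exact (Quot.out_eq (G.connectedComponentMk v))
    have key : ∀ (a b u v : V) (p : G.Walk a u) (q : G.Walk b v), a = b → G.Adj u v →
        walkSign G (fun e => σ e * σ' e) p * walkSign G (fun e => σ e * σ' e) q
          = σ s(u, v) * σ' s(u, v) := by
      intro a b u v p q hab h
      subst hab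
      have := ws_closed _ hc (p.append (SimpleGraph.Walk.cons h q.reverse))
      rw [ws_append, ws_cons, ws_reverse, mul_left_comm] at this
      have h2 := eq_inv_of_mul_eq_one_right this
      rw [h2, Int.units_inv_eq_self]
    refine ⟨fun v => walkSign G (fun e => σ e * σ' e) (hr v).some, ?_⟩
    intro e he
    induction e using Sym2.ind with
    | _ u v =>
      have hadj : G.Adj u v := he
      have hk := key _ _ u v (hr u).some (hr v).some
        (by rw [SimpleGraph.ConnectedComponent.sound hadj.reachable]) hadj
      simp only [sgSwitch, Sym2.lift_mk]
      rw [hk, mul_right_comm, Int.units_mul_self, one_mul]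
  · rintro ⟨ζ, h⟩ v w -
    rw [ws_switch σ σ' ζ h w, Int.units_mul_self, one_mul]
end

section
/- Petersdorf's theorem: For every signature σ of the complete graph K_n, the frustration index satisfies l(K_n, σ) ≤ ⌊(n−1)²/4⌋, with equality for the all-negative signature: l(−K_n) = ⌊(n−1)²/4⌋. Moreover, if (K_n, σ) is not antibalanced, then l(K_n, σ) < l(−K_n). -/
/-- A signed graph is antibalanced if its negative (negating every sign) is balanced. -/
def sgAntibalanced {V : Type*} (G : SimpleGraph V) (σ : Sym2 V → ℤˣ) : Prop :=
  sgBalanced G (fun e => -σ e)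

/-- The frustration index `l(Σ)`: the minimum number of edges whose deletion leaves a
balanced signed graph. -/
noncomputable def frustIndex {V : Type*} (G : SimpleGraph V) (σ : Sym2 V → ℤˣ) : ℕ :=
  sInf {k | ∃ F : Finset (Sym2 V), ↑F ⊆ G.edgeSet ∧ F.card = k ∧
    sgBalanced (G.deleteEdges ↑F) σ}

theorem walkSign_of_switch {V : Type*} (G : SimpleGraph V) (σ : Sym2 V → ℤˣ) (s : V → ℤˣ)
    (h : ∀ u v, G.Adj u v → σ s(u, v) = s u * s v) {u v : V} (w : G.Walk u v) :
    walkSign G σ w = s u * s v := by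
  induction w with
  | nil => simp [walkSign]
  | cons hadj p ih =>
    unfold walkSign at ih ⊢
    rw [SimpleGraph.Walk.edges_cons, List.map_cons, List.prod_cons, ih, h _ _ hadj]
    rw [mul_assoc, ← mul_assoc (s _) (s _) (s _), Int.units_mul_self, one_mul]

theorem balanced_of_switch {V : Type*} (G : SimpleGraph V) (σ : Sym2 V → ℤˣ) (s : V → ℤˣ)
    (h : ∀ u v, G.Adj u v → σ s(u, v) = s u * s v) : sgBalanced G σ := by
  intro v w _
  rw [walkSign_of_switch G σ s h, Int.units_mul_self]

/-- signed adjacency entry -/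
def sgA {n : ℕ} (σ : Sym2 (Fin n) → ℤˣ) (u v : Fin n) : ℤ :=
  if u = v then 0 else (σ s(u, v) : ℤ)

theorem sgA_symm {n : ℕ} (σ : Sym2 (Fin n) → ℤˣ) (u v : Fin n) : sgA σ u v = sgA σ v u := by
  unfold sgA
  rw [Sym2.eq_swap]
  simp [eq_comm]

/-- there is a switching with quadratic form at least `q` on `S` -/
def sgP {n : ℕ} (σ : Sym2 (Fin n) → ℤˣ) (S : Finset (Fin n)) (q : ℤ) : Prop :=
  ∃ s : Fin n → ℤˣ, q ≤ ∑ u ∈ S, ∑ v ∈ S, sgA σ u v * (s u : ℤ) * (s v : ℤ)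

theorem sgP_union {n : ℕ} (σ : Sym2 (Fin n) → ℤˣ) (S T : Finset (Fin n)) (q r : ℤ)
    (hd : Disjoint S T) (hS : sgP σ S q) (hT : sgP σ T r) : sgP σ (S ∪ T) (q + r) := by
  obtain ⟨s, hs⟩ := hS
  obtain ⟨t, ht⟩ := hT
  have key : ∀ ε : ℤˣ, ∑ u ∈ S ∪ T, ∑ v ∈ S ∪ T, sgA σ u v *
      (((if u ∈ S then s u else ε * t u : ℤˣ)) : ℤ) * (((if v ∈ S then s v else ε * t v : ℤˣ)) : ℤ)
      = ∑ u ∈ S, ∑ v ∈ S, sgA σ u v * (s u : ℤ) * (s v : ℤ)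
        + ∑ u ∈ T, ∑ v ∈ T, sgA σ u v * (t u : ℤ) * (t v : ℤ)
        + 2 * (ε : ℤ) * ∑ u ∈ S, ∑ v ∈ T, sgA σ u v * (s u : ℤ) * (t v : ℤ) := by
    intro ε
    have hn : ∀ v ∈ T, v ∉ S := fun v hv hv' => Finset.disjoint_left.mp hd hv' hv
    have hε : (ε : ℤ) * ε = 1 := by
      rw [← Units.val_mul, Int.units_mul_self]; rfl
    rw [Finset.sum_union hd]
    simp_rw [Finset.sum_union hd, Finset.sum_add_distrib]
    have e1 : ∑ u ∈ S, ∑ v ∈ S, sgA σ u v *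
      (((if u ∈ S then s u else ε * t u : ℤˣ)) : ℤ) * (((if v ∈ S then s v else ε * t v : ℤˣ)) : ℤ)
      = ∑ u ∈ S, ∑ v ∈ S, sgA σ u v * (s u : ℤ) * (s v : ℤ) := by
      refine Finset.sum_congr rfl fun u hu => Finset.sum_congr rfl fun v hv => ?_
      rw [if_pos hu, if_pos hv]
    have e2 : ∑ u ∈ T, ∑ v ∈ T, sgA σ u v *
      (((if u ∈ S then s u else ε * t u : ℤˣ)) : ℤ) * (((if v ∈ S then s v else ε * t v : ℤˣ)) : ℤ)
      = ∑ u ∈ T, ∑ v ∈ T, sgA σ u v * (t u : ℤ) * (t v : ℤ) := by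
      refine Finset.sum_congr rfl fun u hu => Finset.sum_congr rfl fun v hv => ?_
      rw [if_neg (hn u hu), if_neg (hn v hv)]
      push_cast
      linear_combination (sgA σ u v * (t u : ℤ) * (t v : ℤ)) * hε
    have e3 : ∑ u ∈ S, ∑ v ∈ T, sgA σ u v *
      (((if u ∈ S then s u else ε * t u : ℤˣ)) : ℤ) * (((if v ∈ S then s v else ε * t v : ℤˣ)) : ℤ)
      = (ε : ℤ) * ∑ u ∈ S, ∑ v ∈ T, sgA σ u v * (s u : ℤ) * (t v : ℤ) := by
      simp_rw [Finset.mul_sum]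
      refine Finset.sum_congr rfl fun u hu => Finset.sum_congr rfl fun v hv => ?_
      rw [if_pos hu, if_neg (hn v hv)]
      push_cast
      ring
    have e4 : ∑ u ∈ T, ∑ v ∈ S, sgA σ u v *
      (((if u ∈ S then s u else ε * t u : ℤˣ)) : ℤ) * (((if v ∈ S then s v else ε * t v : ℤˣ)) : ℤ)
      = (ε : ℤ) * ∑ u ∈ S, ∑ v ∈ T, sgA σ u v * (s u : ℤ) * (t v : ℤ) := by
      rw [Finset.sum_comm]
      simp_rw [Finset.mul_sum]
      refine Finset.sum_congr rfl fun u hu => Finset.sum_congr rfl fun v hv => ?_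
      rw [if_pos hu, if_neg (hn v hv), sgA_symm]
      push_cast
      ring
    rw [e1, e2, e3, e4]
    ring
  by_cases hc : 0 ≤ ∑ u ∈ S, ∑ v ∈ T, sgA σ u v * (s u : ℤ) * (t v : ℤ)
  · refine ⟨fun u => if u ∈ S then s u else 1 * t u, ?_⟩
    have := key 1
    rw [this]
    push_cast
    linarith
  · refine ⟨fun u => if u ∈ S then s u else (-1) * t u, ?_⟩
    have := key (-1)
    rw [this]
    push_cast
    linarith

theorem coe_mul_self (a : ℤˣ) : (a : ℤ) * a = 1 := by
  rw [← Units.val_mul, Int.units_mul_self]; rfl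

theorem sgP_pair {n : ℕ} (σ : Sym2 (Fin n) → ℤˣ) (a b : Fin n) (hab : a ≠ b) :
    sgP σ {a, b} 2 := by
  refine ⟨fun u => if u = a then 1 else σ s(a, u), ?_⟩
  rw [Finset.sum_pair hab, Finset.sum_pair hab, Finset.sum_pair hab]
  have h := coe_mul_self (σ s(a, b))
  have e : s(b, a) = s(a, b) := Sym2.eq_swap
  simp [sgA, hab, hab.symm, e, h]

theorem sgP_triangle {n : ℕ} (σ : Sym2 (Fin n) → ℤˣ) (a b c : Fin n) (hab : a ≠ b)
    (hac : a ≠ c) (hbc : b ≠ c) (h : σ s(a, b) * σ s(a, c) * σ s(b, c) = 1) :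
    sgP σ {a, b, c} 6 := by
  refine ⟨fun u => if u = a then 1 else σ s(a, u), ?_⟩
  have h1 := coe_mul_self (σ s(a, b))
  have h2 := coe_mul_self (σ s(a, c))
  have e1 : s(b, a) = s(a, b) := Sym2.eq_swap
  have e2 : s(c, a) = s(a, c) := Sym2.eq_swap
  have e3 : s(c, b) = s(b, c) := Sym2.eq_swap
  have h' : (σ s(a, b) : ℤ) * σ s(a, c) * σ s(b, c) = 1 := by
    rw [← Units.val_mul, ← Units.val_mul, h]; rfl
  have n1 : a ∉ ({b, c} : Finset (Fin n)) := by simp [hab, hac]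
  simp only [Finset.sum_insert n1, Finset.sum_pair hbc]
  simp only [sgA, hab, hab.symm, hac, hac.symm, hbc, hbc.symm, e1, e2, e3, if_true, if_false,
    Units.val_one]
  linarith

theorem sgP_all {n : ℕ} (σ : Sym2 (Fin n) → ℤˣ) (k : ℕ) : ∀ S : Finset (Fin n),
    S.card / 2 = k → sgP σ S (2 * k) := by
  induction k with
  | zero =>
    intro S hS
    have hc : S.card ≤ 1 := by omega
    refine ⟨fun _ => 1, ?_⟩
    refine le_of_eq ?_
    symm
    simp only [Nat.cast_zero, mul_zero]
    refine Finset.sum_eq_zero fun u hu => Finset.sum_eq_zero fun v hv => ?_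
    have := Finset.card_le_one.mp hc u hu v hv
    simp [sgA, this]
  | succ k ih =>
    intro S hS
    obtain ⟨a, ha, b, hb, hab⟩ := Finset.one_lt_card.mp (show 1 < S.card by omega)
    have hsub : ({a, b} : Finset (Fin n)) ⊆ S := by
      intro x hx
      simp only [Finset.mem_insert, Finset.mem_singleton] at hx
      rcases hx with rfl | rfl <;> assumption
    have hcard : (S \ {a, b}).card / 2 = k := by
      rw [Finset.card_sdiff_of_subset hsub, Finset.card_pair hab]
      omega
    have := sgP_union σ _ _ _ _ Finset.sdiff_disjoint (ih _ hcard) (sgP_pair σ a b hab)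
    rw [Finset.sdiff_union_of_subset hsub] at this
    push_cast
    rw [mul_add]
    simpa using this

open Classical in
theorem frust_le {n : ℕ} (σ : Sym2 (Fin n) → ℤˣ) (q : ℤ) (h : sgP σ Finset.univ q) :
    4 * (frustIndex (⊤ : SimpleGraph (Fin n)) σ : ℤ) ≤ n * n - n - q := by
  obtain ⟨s, hs⟩ := h
  obtain ⟨H, hH⟩ : ∃ H : SimpleGraph (Fin n), ∀ u v, H.Adj u v ↔
      (u ≠ v ∧ σ s(u, v) ≠ s u * s v) :=
    ⟨{ Adj := fun u v => u ≠ v ∧ σ s(u, v) ≠ s u * s v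
       symm := ⟨by
        intro u v h
        refine ⟨h.1.symm, ?_⟩
        rw [Sym2.eq_swap, mul_comm]
        exact h.2⟩
       loopless := ⟨fun u h => h.1 rfl⟩ }, fun u v => Iff.rfl⟩
  have hle : frustIndex (⊤ : SimpleGraph (Fin n)) σ ≤ H.edgeFinset.card := by
    refine Nat.sInf_le ⟨H.edgeFinset, ?_, rfl, ?_⟩
    · rw [SimpleGraph.coe_edgeFinset]
      exact SimpleGraph.edgeSet_mono le_top
    · refine balanced_of_switch _ σ s ?_
      intro u v huv
      rw [SimpleGraph.coe_edgeFinset, SimpleGraph.deleteEdges_adj, SimpleGraph.mem_edgeSet] at huv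
      by_contra hne
      exact huv.2 ((hH u v).mpr ⟨huv.1.ne, hne⟩)
  have hsum := H.sum_degrees_eq_twice_card_edges
  have hd : ∀ u, (H.degree u : ℤ) = ∑ v, if H.Adj u v then (1 : ℤ) else 0 := by
    intro u
    rw [← SimpleGraph.card_neighborFinset_eq_degree, SimpleGraph.neighborFinset_eq_filter]
    simp
  have hA : ∀ u v, sgA σ u v * (s u : ℤ) * (s v : ℤ)
      = 1 - (if u = v then 1 else 0) - 2 * (if H.Adj u v then (1 : ℤ) else 0) := by
    intro u v
    simp only [hH]
    by_cases huv : u = v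
    · simp [sgA, huv]
    · simp only [sgA, huv, if_false, ne_eq, not_false_eq_true, true_and]
      rcases Int.units_eq_one_or (σ s(u, v)) with h1 | h1 <;>
      rcases Int.units_eq_one_or (s u) with h2 | h2 <;>
      rcases Int.units_eq_one_or (s v) with h3 | h3 <;>
      simp [h1, h2, h3]
  simp_rw [hA, Finset.sum_sub_distrib, ← Finset.mul_sum, ← hd] at hs
  have hsum' : ∑ u, (H.degree u : ℤ) = 2 * H.edgeFinset.card := by exact_mod_cast hsum
  rw [hsum'] at hs
  simp at hs
  have : (frustIndex (⊤ : SimpleGraph (Fin n)) σ : ℤ) ≤ H.edgeFinset.card := by exact_mod_cast hle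
  simp at this
  linarith

theorem exists_triangle {n : ℕ} (σ : Sym2 (Fin n) → ℤˣ)
    (h : ¬ sgAntibalanced (⊤ : SimpleGraph (Fin n)) σ) :
    ∃ a b c, a ≠ b ∧ a ≠ c ∧ b ≠ c ∧ σ s(a, b) * σ s(a, c) * σ s(b, c) = 1 := by
  by_contra hno
  push Not at hno
  apply h
  intro a w hw
  have hb : sgBalanced (⊤ : SimpleGraph (Fin n)) (fun e => -σ e) := by
    refine balanced_of_switch _ _ (fun u => if u = a then 1 else -σ s(a, u)) ?_
    intro u v huv
    have huv : u ≠ v := huv.ne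
    by_cases hu : u = a
    · subst hu
      simp [huv.symm]
    · by_cases hv : v = a
      · subst hv
        simp [huv, Sym2.eq_swap]
      · have := hno a u v (Ne.symm hu) (Ne.symm hv) huv
        simp only [hu, hv, if_false]
        revert this
        generalize σ s(a, u) = x
        generalize σ s(a, v) = y
        generalize σ s(u, v) = z
        revert x y z
        decide
  exact hb w hw

open Classical in
theorem frust_neg_ge (n : ℕ) :
    (n - 1) ^ 2 / 4 ≤ frustIndex (⊤ : SimpleGraph (Fin n)) (fun _ => -1) := by
  unfold frustIndex
  refine le_csInf ?_ ?_
  · refine ⟨_, (⊤ : SimpleGraph (Fin n)).edgeFinset, ?_, rfl, ?_⟩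
    · simp
    · refine balanced_of_switch _ _ (fun _ => 1) ?_
      intro u v huv
      rw [SimpleGraph.coe_edgeFinset, SimpleGraph.deleteEdges_adj] at huv
      exact absurd huv.1 huv.2
  · rintro k ⟨F, hF, rfl, hbal⟩
    have hfree : ((⊤ : SimpleGraph (Fin n)).deleteEdges ↑F).CliqueFree 3 := by
      intro t ht
      obtain ⟨a, b, c, hab, hac, hbc, -⟩ := SimpleGraph.is3Clique_iff.mp ht
      have hcyc : (SimpleGraph.Walk.cons hab (.cons hbc (.cons hac.symm .nil))).IsCycle := by
        have := hab.ne
        have := hac.ne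
        have := hbc.ne
        rw [SimpleGraph.Walk.cons_isCycle_iff]
        simp_all [SimpleGraph.Walk.isPath_def, eq_comm]
      have := hbal _ hcyc
      revert this
      simp [walkSign]
    have hE := hfree.card_edgeFinset_le
    have hF' : F ⊆ (⊤ : SimpleGraph (Fin n)).edgeFinset := by
      rw [← Finset.coe_subset, SimpleGraph.coe_edgeFinset]
      exact hF
    have hcard : ((⊤ : SimpleGraph (Fin n)).deleteEdges ↑F).edgeFinset.card + F.card
        = n.choose 2 := by
      have h0 := SimpleGraph.card_edgeFinset_top_eq_card_choose_two (V := Fin n)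
      rw [Fintype.card_fin] at h0
      have h1 := Finset.card_sdiff_add_card_eq_card hF'
      rw [← SimpleGraph.edgeFinset_deleteEdges] at h1
      convert h1.trans _
      convert h0
    simp only [Fintype.card_fin] at hE
    have hch : n.choose 2 * 2 + n = n * n := by
      rcases n with _ | m
      · simp
      · have := Nat.triangle_succ m
        rw [Nat.choose_two_right, Nat.div_mul_cancel (Nat.even_mul_pred_self _).two_dvd]
        simp
        ring
    generalize ((⊤ : SimpleGraph (Fin n)).deleteEdges ↑F).edgeFinset.card = E at hE hcard
    generalize F.card = f at *
    generalize n.choose 2 = C at *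
    rcases Nat.even_or_odd' n with ⟨k, hk | hk⟩
    · have e : n % 2 = 0 := by omega
      rw [e] at hE
      have e3 : (n - 1) ^ 2 / 4 = k * k - k := by
        rcases k with _ | k
        · subst hk; simp
        · have e2 : n - 1 = 2 * k + 1 := by omega
          have : (2 * k + 1) ^ 2 = 4 * (k * k + k) + 1 := by ring
          have : (k + 1) * (k + 1) = k * k + k + k + 1 := by ring
          rw [e2]
          omega
      have e4 : n ^ 2 = 4 * (k * k) := by rw [hk]; ring
      have e5 : n * n = 4 * (k * k) := by rw [hk]; ring
      simp at hE
      omega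
    · have e : n % 2 = 1 := by omega
      rw [e] at hE
      have e3 : (n - 1) ^ 2 / 4 = k * k := by
        have e2 : n - 1 = 2 * k := by omega
        have : (2 * k) ^ 2 = 4 * (k * k) := by ring
        rw [e2]
        omega
      have e4 : n ^ 2 = 4 * (k * k) + 4 * k + 1 := by rw [hk]; ring
      have e5 : n * n = 4 * (k * k) + 4 * k + 1 := by rw [hk]; ring
      simp at hE
      omega

/-- Petersdorf's theorem: for every signature `σ` of `K_n`,
`l(K_n, σ) ≤ ⌊(n-1)²/4⌋`, with equality for the all-negative signature; moreover if
`(K_n, σ)` is not antibalanced then `l(K_n, σ) < l(-K_n)`. -/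
theorem petersdorf (n : ℕ) (σ : Sym2 (Fin n) → ℤˣ) :
    frustIndex (⊤ : SimpleGraph (Fin n)) σ ≤ (n - 1) ^ 2 / 4 ∧
    frustIndex (⊤ : SimpleGraph (Fin n)) (fun _ => -1) = (n - 1) ^ 2 / 4 ∧
    (¬ sgAntibalanced (⊤ : SimpleGraph (Fin n)) σ →
      frustIndex (⊤ : SimpleGraph (Fin n)) σ < (n - 1) ^ 2 / 4) := by
  have hup : ∀ τ : Sym2 (Fin n) → ℤˣ,
      frustIndex (⊤ : SimpleGraph (Fin n)) τ ≤ (n - 1) ^ 2 / 4 := by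
    intro τ
    have h1 := frust_le τ _ (sgP_all τ (n / 2) Finset.univ (by simp))
    rw [Nat.le_div_iff_mul_le (by norm_num)]
    rcases Nat.even_or_odd' n with ⟨k, hk | hk⟩
    · rcases k with _ | k
      · subst hk; simp at h1 ⊢; omega
      · have e1 : n / 2 = k + 1 := by omega
        have e2 : n - 1 = 2 * k + 1 := by omega
        rw [e1] at h1
        rw [e2]
        have : (n : ℤ) = 2 * (k + 1) := by exact_mod_cast hk
        rw [this] at h1
        zify
        push_cast at h1
        nlinarith
    · have e1 : n / 2 = k := by omega
      have e2 : n - 1 = 2 * k := by omega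
      rw [e1] at h1
      rw [e2]
      have : (n : ℤ) = 2 * k + 1 := by exact_mod_cast hk
      rw [this] at h1
      zify
      nlinarith
  refine ⟨hup σ, le_antisymm (hup _) (frust_neg_ge n), fun hna => ?_⟩
  obtain ⟨a, b, c, hab, hac, hbc, hT⟩ := exists_triangle σ hna
  have hcard : ({a, b, c} : Finset (Fin n)).card = 3 :=
    Finset.card_eq_three.mpr ⟨a, b, c, hab, hac, hbc, rfl⟩
  have hn : 3 ≤ n := by
    have := Finset.card_le_univ ({a, b, c} : Finset (Fin n))
    rw [hcard] at this
    simpa using this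
  have hc2 : (({a, b, c} : Finset (Fin n))ᶜ).card / 2 = (n - 3) / 2 := by
    rw [Finset.card_compl, hcard, Fintype.card_fin]
  have hP := sgP_union σ _ _ _ _ disjoint_compl_right (sgP_triangle σ a b c hab hac hbc hT)
    (sgP_all σ _ _ hc2)
  rw [Finset.union_compl] at hP
  have h1 := frust_le σ _ hP
  generalize frustIndex (⊤ : SimpleGraph (Fin n)) σ = f at h1 ⊢
  rcases Nat.even_or_odd' n with ⟨k, hk | hk⟩
  · obtain ⟨j, rfl⟩ : ∃ j, k = j + 2 := ⟨k - 2, by omega⟩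
    have e1 : (n - 3) / 2 = j := by omega
    have e2 : n - 1 = 2 * j + 3 := by omega
    rw [e1] at h1
    rw [e2]
    have : (n : ℤ) = 2 * (j + 2) := by exact_mod_cast hk
    rw [this] at h1
    have e3 : (2 * j + 3) ^ 2 / 4 = j ^ 2 + 3 * j + 2 := by
      have : (2 * j + 3) ^ 2 = 4 * (j ^ 2 + 3 * j + 2) + 1 := by ring
      omega
    rw [e3]
    zify
    nlinarith
  · obtain ⟨j, rfl⟩ : ∃ j, k = j + 1 := ⟨k - 1, by omega⟩
    have e1 : (n - 3) / 2 = j := by omega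
    have e2 : n - 1 = 2 * j + 2 := by omega
    rw [e1] at h1
    rw [e2]
    have : (n : ℤ) = 2 * (j + 1) + 1 := by exact_mod_cast hk
    rw [this] at h1
    have e3 : (2 * j + 2) ^ 2 / 4 = j ^ 2 + 2 * j + 1 := by
      have : (2 * j + 2) ^ 2 = 4 * (j ^ 2 + 2 * j + 1) := by ring
      omega
    rw [e3]
    zify
    nlinarith
end

section
/- For every signature σ of the complete graph K_n (n ≥ 2), the frustration number satisfies l_0(K_n, σ) ≤ n − 2, with equality for the all-negative signature: l_0(−K_n) = n − 2. Moreover, if (K_n, σ) is not antibalanced, then l_0(K_n, σ) < n − 2. -/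
/-- The frustration number `l₀(Σ)`: the minimum number of vertices whose deletion leaves
a balanced signed graph (equivalently, a minimum set of vertices meeting every negative
circle). -/
noncomputable def frustNum {V : Type*} (G : SimpleGraph V) (σ : Sym2 V → ℤˣ) : ℕ :=
  sInf {k | ∃ X : Finset V, X.card = k ∧
    ∀ ⦃a : V⦄ (w : G.Walk a a), w.IsCycle → (∀ x ∈ w.support, x ∉ X) →
      walkSign G σ w = 1}

lemma walkSign_potential {V : Type*} (G : SimpleGraph V) (σ : Sym2 V → ℤˣ) (X : Finset V)
    (f : V → ℤˣ) (hf : ∀ u v, u ≠ v → u ∉ X → v ∉ X → σ s(u, v) = f u * f v)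
    {a b : V} (w : G.Walk a b) (hw : ∀ x ∈ w.support, x ∉ X) :
    walkSign G σ w = f a * f b := by
  induction w with
  | nil => simp [walkSign, Int.units_mul_self]
  | @cons u v t h p ih =>
    have h1 := ih (fun x hx => hw x (by simp [hx]))
    have h2 := hf u v h.ne (hw u (by simp)) (hw v (by simp))
    have h3 : walkSign G σ (SimpleGraph.Walk.cons h p) = σ s(u, v) * walkSign G σ p := by
      simp [walkSign]
    rw [h3, h1, h2, mul_assoc, ← mul_assoc (f v), Int.units_mul_self, one_mul]

lemma closed_potential {V : Type*} (G : SimpleGraph V) (σ : Sym2 V → ℤˣ) (X : Finset V)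
    (f : V → ℤˣ) (hf : ∀ u v, u ≠ v → u ∉ X → v ∉ X → σ s(u, v) = f u * f v)
    {a : V} (w : G.Walk a a) (hw : ∀ x ∈ w.support, x ∉ X) :
    walkSign G σ w = 1 := by
  rw [walkSign_potential G σ X f hf w hw, Int.units_mul_self]

lemma frustNum_le_of_potential {n : ℕ} (σ : Sym2 (Fin n) → ℤˣ) (S : Finset (Fin n))
    (f : Fin n → ℤˣ) (hf : ∀ u ∈ S, ∀ v ∈ S, u ≠ v → σ s(u, v) = f u * f v) :
    frustNum (⊤ : SimpleGraph (Fin n)) σ ≤ n - S.card := by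
  apply Nat.sInf_le
  refine ⟨Sᶜ, by simp [Finset.card_compl], ?_⟩
  intro a w _ hs
  refine closed_potential _ σ Sᶜ f ?_ w hs
  intro u v huv hu hv
  exact hf u (by simpa using hu) v (by simpa using hv) huv

lemma frustNum_le_two {n : ℕ} (hn : 2 ≤ n) (σ : Sym2 (Fin n) → ℤˣ) :
    frustNum (⊤ : SimpleGraph (Fin n)) σ ≤ n - 2 := by
  let a : Fin n := ⟨0, by omega⟩
  let b : Fin n := ⟨1, by omega⟩
  have hab : a ≠ b := by simp [a, b]
  have := frustNum_le_of_potential σ {a, b} (fun v => if v = a then 1 else σ s(a, b)) (by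
    intro u hu v hv huv
    simp only [Finset.mem_insert, Finset.mem_singleton] at hu hv
    rcases hu with rfl | rfl <;> rcases hv with rfl | rfl <;>
      simp_all [Sym2.eq_swap, hab.symm])
  rwa [Finset.card_pair hab] at this

lemma antibalanced_of_triangles {n : ℕ} (hn : 2 ≤ n) (σ : Sym2 (Fin n) → ℤˣ)
    (h : ∀ a b c : Fin n, a ≠ b → a ≠ c → b ≠ c → σ s(a, b) * σ s(a, c) * σ s(b, c) ≠ 1) :
    sgAntibalanced (⊤ : SimpleGraph (Fin n)) σ := by
  intro v w _
  let a : Fin n := ⟨0, by omega⟩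
  refine closed_potential _ _ ∅ (fun v => if v = a then 1 else - σ s(a, v)) ?_ w (by simp)
  intro u v huv _ _
  by_cases hu : u = a
  · subst hu; simp [huv.symm]
  · by_cases hv : v = a
    · subst hv; simp [hu, Sym2.eq_swap]
    · have := h a u v (Ne.symm hu) (Ne.symm hv) huv
      simp only [hu, hv, if_false]
      rcases Int.units_eq_one_or (σ s(a, u)) with h1 | h1 <;>
      rcases Int.units_eq_one_or (σ s(a, v)) with h2 | h2 <;>
      rcases Int.units_eq_one_or (σ s(u, v)) with h3 | h3 <;>
      simp_all

theorem frustNum_complete (n : ℕ) (hn : 2 ≤ n) (σ : Sym2 (Fin n) → ℤˣ) :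
    frustNum (⊤ : SimpleGraph (Fin n)) σ ≤ n - 2 ∧
    frustNum (⊤ : SimpleGraph (Fin n)) (fun _ => -1) = n - 2 ∧
    (¬ sgAntibalanced (⊤ : SimpleGraph (Fin n)) σ →
      frustNum (⊤ : SimpleGraph (Fin n)) σ < n - 2) := by
  refine ⟨frustNum_le_two hn σ, le_antisymm (frustNum_le_two hn _) ?_, ?_⟩
  · apply le_csInf
    · exact ⟨_, Finset.univ, rfl, fun a w _ h => absurd (Finset.mem_univ a) (h a (by simp))⟩
    · rintro k ⟨X, rfl, hX⟩
      by_contra hlt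
      have hc : 2 < (Xᶜ).card := by
        rw [Finset.card_compl, Fintype.card_fin]; omega
      obtain ⟨a, b, c, ha, hb, hc, hab, hac, hbc⟩ := Finset.two_lt_card_iff.1 hc
      simp only [Finset.mem_compl] at ha hb hc
      let w : (⊤ : SimpleGraph (Fin n)).Walk a a :=
        .cons (v := b) (by simpa using hab) (.cons (v := c) (by simpa using hbc)
          (.cons (v := a) (by simpa using hac.symm) .nil))
      have hcyc : w.IsCycle := by
        simp [w, SimpleGraph.Walk.cons_isCycle_iff, hab, hac, hbc, hab.symm, hac.symm, hbc.symm]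
      have := hX w hcyc (by simp [w, ha, hb, hc])
      simp [w, walkSign] at this
  · intro hna
    have : ∃ a b c : Fin n, a ≠ b ∧ a ≠ c ∧ b ≠ c ∧
        σ s(a, b) * σ s(a, c) * σ s(b, c) = 1 := by
      by_contra hcon
      push Not at hcon
      exact hna (antibalanced_of_triangles hn σ hcon)
    obtain ⟨a, b, c, hab, hac, hbc, h⟩ := this
    have hS : ({a, b, c} : Finset (Fin n)).card = 3 := Finset.card_eq_three.2 ⟨a, b, c, hab, hac, hbc, rfl⟩
    have h3 : 3 ≤ n := by
      have := Finset.card_le_univ ({a, b, c} : Finset (Fin n))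
      rw [hS, Fintype.card_fin] at this
      exact this
    have hbc' : σ s(b, c) = σ s(a, b) * σ s(a, c) := by
      rw [mul_eq_one_iff_inv_eq] at h
      rw [← h, Int.units_inv_eq_self]
    have := frustNum_le_of_potential σ {a, b, c} (fun v => if v = a then 1 else σ s(a, v)) (by
      intro u hu v hv huv
      simp only [Finset.mem_insert, Finset.mem_singleton] at hu hv
      by_cases hua : u = a
      · subst hua; simp [huv.symm]
      by_cases hva : v = a
      · subst hva; simp [hua, Sym2.eq_swap]
      simp only [hua, hva, false_or, if_false] at hu hv ⊢
      rcases hu with rfl | rfl <;> rcases hv with rfl | rfl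
      · exact absurd rfl huv
      · exact hbc'
      · rw [Sym2.eq_swap, hbc', mul_comm]
      · exact absurd rfl huv)
    rw [hS] at this
    omega
end

section
/- Let Σ be a signed graph and e an edge of Σ. There is a positive circle of Σ containing e if and only if e is not an isthmus (bridge) and either the block of Σ containing e is balanced, or that block is unbalanced and e is not a balancing edge of that block. -/
/-- A set of vertices induces an inseparable subgraph: the induced subgraph is connected
and remains connected after deleting any one of its vertices (no cutpoint). -/
def inseparableOn {V : Type*} (G : SimpleGraph V) (S : Set V) : Prop :=
  (G.induce S).Connected ∧ ∀ v ∈ S, (G.induce (S \ {v})).Connected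

/-- `S` is (the vertex set of) a block of `G`: a maximal inseparable subgraph. -/
def isBlock {V : Type*} (G : SimpleGraph V) (S : Set V) : Prop :=
  inseparableOn G S ∧ ∀ T : Set V, S ⊆ T → inseparableOn G T → T = S

/-- The signed graph restricted to `S` (e.g. a block) is balanced: every circle lying
within `S` is positive. -/
def balancedOn {V : Type*} (G : SimpleGraph V) (σ : Sym2 V → ℤˣ) (S : Set V) : Prop :=
  ∀ ⦃a : V⦄ (w : G.Walk a a), w.IsCycle → (∀ x ∈ w.support, x ∈ S) →
    walkSign G σ w = 1

namespace SignedAux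

open SimpleGraph

variable {V : Type*} {G : SimpleGraph V} {σ : Sym2 V → ℤˣ}

lemma sign_nil (a : V) : walkSign G σ (Walk.nil : G.Walk a a) = 1 := by
  simp [walkSign]

lemma sign_cons {a b c : V} (h : G.Adj a b) (p : G.Walk b c) :
    walkSign G σ (Walk.cons h p) = σ s(a, b) * walkSign G σ p := by
  simp [walkSign]

lemma sign_append {a b c : V} (p : G.Walk a b) (q : G.Walk b c) :
    walkSign G σ (p.append q) = walkSign G σ p * walkSign G σ q := by
  simp [walkSign]

lemma sign_reverse {a b : V} (p : G.Walk a b) :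
    walkSign G σ p.reverse = walkSign G σ p := by
  simp [walkSign, List.prod_reverse]

lemma unit_sq (x : ℤˣ) : x * x = 1 := Int.units_mul_self x

/-- Concatenation of two paths meeting only at the common end. -/
lemma isPath_append {a b c : V} {p : G.Walk a b} {q : G.Walk b c}
    (hp : p.IsPath) (hq : q.IsPath)
    (h : ∀ x ∈ p.support, x ∈ q.support → x = b) : (p.append q).IsPath := by
  rw [Walk.isPath_def, Walk.support_append, List.nodup_append]
  refine ⟨hp.support_nodup, hq.support_nodup.tail, ?_⟩
  rintro x hx y hy rfl
  have hxb := h x hx (List.mem_of_mem_tail hy)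
  subst hxb
  have := hq.support_nodup
  rw [Walk.support_eq_cons] at this
  exact (List.nodup_cons.1 this).1 hy

/-- Two halves of a path meet only at the common end. -/
lemma isPath_append_meet {a b c : V} {p : G.Walk a b} {q : G.Walk b c}
    (h : (p.append q).IsPath) : ∀ x ∈ p.support, x ∈ q.support → x = b := by
  intro x hx hy
  rw [Walk.isPath_def, Walk.support_append, List.nodup_append] at h
  rw [Walk.support_eq_cons] at hy
  rcases List.mem_cons.1 hy with h1 | h1
  · exact h1
  · exact absurd rfl (h.2.2 x hx x h1)

/-- A path joining the ends of an edge it contains is that edge. -/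
lemma path_edge {a c : V} (p : G.Walk c a) (hp : p.IsPath) (he : s(a, c) ∈ p.edges) :
    p.length = 1 ∧ walkSign G σ p = σ s(a, c) := by
  cases p with
  | nil => simp at he
  | @cons _ d _ h q =>
    rw [Walk.cons_isPath_iff] at hp
    rw [Walk.edges_cons, List.mem_cons] at he
    rcases he with he | he
    · have hda : d = a := by
        rcases Sym2.eq_iff.1 he with ⟨h1, h2⟩ | ⟨h1, h2⟩
        · subst h2; exact h1 ▸ rfl
        · exact h1.symm
      subst hda
      have := Walk.isPath_iff_eq_nil.1 hp.1
      subst this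
      simp [walkSign, Sym2.eq_swap]
    · exact absurd (Walk.snd_mem_support_of_mem_edges q he) hp.2

/-- Either a walk contains a negative circle, or it contains a path of the same sign. -/
lemma walk_reduce {a b : V} (w : G.Walk a b) :
    (∃ (c : V) (d : G.Walk c c), d.IsCycle ∧ walkSign G σ d = -1 ∧
      (∀ x ∈ d.support, x ∈ w.support) ∧ ∀ e ∈ d.edges, e ∈ w.edges) ∨
    (∃ p : G.Walk a b, p.IsPath ∧ walkSign G σ p = walkSign G σ w ∧
      (∀ x ∈ p.support, x ∈ w.support) ∧ ∀ e ∈ p.edges, e ∈ w.edges) := by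
  induction w with
  | nil => exact Or.inr ⟨Walk.nil, by simp, rfl, fun _ h => h, fun _ h => h⟩
  | @cons a c b h w ih =>
    rcases ih with ⟨x, d, h1, h2, h3, h4⟩ | ⟨p, h1, h2, h3, h4⟩
    · left
      exact ⟨x, d, h1, h2, fun x hx => by simp [h3 x hx], fun e he => by simp [h4 e he]⟩
    · by_cases ha : a ∈ p.support
      · obtain ⟨q, r, rfl⟩ := Walk.mem_support_iff_exists_append.1 ha
        have hq : q.IsPath := h1.of_append_left
        have hr : r.IsPath := h1.of_append_right
        rw [sign_append] at h2
        have hkey : walkSign G σ (Walk.cons h q) = 1 →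
            walkSign G σ r = walkSign G σ (Walk.cons h w) := by
          intro h5
          rw [sign_cons] at h5
          rw [sign_cons, ← h2, ← mul_assoc, h5, one_mul]
        have hres : walkSign G σ (Walk.cons h q) = 1 →
            (∃ p : G.Walk a b, p.IsPath ∧ walkSign G σ p = walkSign G σ (Walk.cons h w) ∧
              (∀ x ∈ p.support, x ∈ (Walk.cons h w).support) ∧
              ∀ e ∈ p.edges, e ∈ (Walk.cons h w).edges) := by
          intro h5
          refine ⟨r, hr, hkey h5, ?_, ?_⟩
          · intro x hx
            rw [Walk.support_cons]
            exact List.mem_cons_of_mem _ (h3 x (by simp [Walk.mem_support_append_iff, hx]))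
          · intro x hx
            rw [Walk.edges_cons]
            exact List.mem_cons_of_mem _ (h4 x (by simp [hx]))
        by_cases he : s(a, c) ∈ q.edges
        · right
          apply hres
          rw [sign_cons, (path_edge q hq he).2, unit_sq]
        · rcases Int.units_eq_one_or (walkSign G σ (Walk.cons h q)) with h5 | h5
          · exact Or.inr (hres h5)
          · left
            refine ⟨a, Walk.cons h q, (Walk.cons_isCycle_iff q h).2 ⟨hq, he⟩, h5, ?_, ?_⟩
            · intro x hx
              rw [Walk.support_cons, List.mem_cons] at hx ⊢
              exact hx.imp id fun hx => h3 x (by simp [Walk.mem_support_append_iff, hx])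
            · intro x hx
              rw [Walk.edges_cons, List.mem_cons] at hx ⊢
              exact hx.imp id fun hx => h4 x (by simp [hx])
      · right
        refine ⟨Walk.cons h p, (Walk.cons_isPath_iff h p).2 ⟨h1, ha⟩, ?_, ?_, ?_⟩
        · rw [sign_cons, sign_cons, h2]
        · intro x hx
          rw [Walk.support_cons, List.mem_cons] at hx ⊢
          exact hx.imp id (h3 x)
        · intro x hx
          rw [Walk.edges_cons, List.mem_cons] at hx ⊢
          exact hx.imp id (h4 x)

/-- Splitting a walk at one of its edges. -/
lemma split_edge {u v a b : V} (w : G.Walk a b) (he : s(u, v) ∈ w.edges) :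
    (∃ (h : G.Adj u v) (p : G.Walk a u) (q : G.Walk v b), w = p.append (Walk.cons h q)) ∨
    (∃ (h : G.Adj v u) (p : G.Walk a v) (q : G.Walk u b), w = p.append (Walk.cons h q)) := by
  induction w with
  | nil => simp at he
  | @cons a c b h w ih =>
    rw [Walk.edges_cons, List.mem_cons] at he
    rcases he with he | he
    · rcases Sym2.eq_iff.1 he with ⟨h1, h2⟩ | ⟨h1, h2⟩
      · subst h1 h2
        exact Or.inl ⟨h, Walk.nil, w, rfl⟩
      · subst h1 h2
        exact Or.inr ⟨h, Walk.nil, w, rfl⟩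
    · rcases ih he with ⟨h', p, q, rfl⟩ | ⟨h', p, q, rfl⟩
      · exact Or.inl ⟨h', Walk.cons h p, q, rfl⟩
      · exact Or.inr ⟨h', Walk.cons h p, q, rfl⟩

lemma cycle_open {u v a : V} (h : G.Adj u v) (p : G.Walk a u) (q : G.Walk v a)
    (hc : (p.append (Walk.cons h q)).IsCycle) :
    (q.append p).IsPath ∧ s(u, v) ∉ (q.append p).edges ∧
      walkSign G σ (p.append (Walk.cons h q)) = σ s(u, v) * walkSign G σ (q.append p) ∧
      ∀ x ∈ (p.append (Walk.cons h q)).support, x ∈ (q.append p).support := by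
  refine ⟨?_, ?_, ?_, ?_⟩
  · have := hc.support_nodup
    rw [Walk.tail_support_append, Walk.support_cons, List.tail_cons] at this
    rw [Walk.isPath_def, Walk.support_append]
    exact List.perm_append_comm.nodup_iff.1 this
  · have := hc.isTrail.edges_nodup
    rw [Walk.edges_append, Walk.edges_cons] at this
    have h2 := (List.perm_middle.nodup_iff.1 this)
    rw [List.nodup_cons] at h2
    intro h3
    apply h2.1
    rw [Walk.edges_append] at h3
    exact List.perm_append_comm.mem_iff.1 h3
  · rw [sign_append, sign_append, sign_cons]
    ac_rfl
  · intro x hx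
    rw [Walk.mem_support_append_iff, Walk.support_cons, List.mem_cons] at hx
    rw [Walk.mem_support_append_iff]
    rcases hx with hx | rfl | hx
    · exact Or.inr hx
    · exact Or.inr p.end_mem_support
    · exact Or.inl hx

/-- Opening a circle at one of its edges. -/
lemma cycle_to_path {u v a : V} (w : G.Walk a a) (hc : w.IsCycle) (he : s(u, v) ∈ w.edges) :
    ∃ p : G.Walk v u, p.IsPath ∧ s(u, v) ∉ p.edges ∧
      walkSign G σ w = σ s(u, v) * walkSign G σ p ∧ ∀ x ∈ w.support, x ∈ p.support := by
  rcases split_edge w he with ⟨h, p, q, rfl⟩ | ⟨h, p, q, rfl⟩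
  · exact ⟨q.append p, cycle_open h p q hc⟩
  · obtain ⟨h1, h2, h3, h4⟩ := cycle_open (σ := σ) h p q hc
    refine ⟨(q.append p).reverse, h1.reverse, ?_, ?_, ?_⟩
    · rw [Walk.edges_reverse, List.mem_reverse, Sym2.eq_swap]; exact h2
    · rw [sign_reverse, h3, Sym2.eq_swap]
    · intro x hx
      rw [Walk.support_reverse, List.mem_reverse]
      exact h4 x hx

lemma exists_walk {S : Set V} (h : (G.induce S).Connected) {x y : V} (hx : x ∈ S)
    (hy : y ∈ S) : ∃ w : G.Walk x y, ∀ z ∈ w.support, z ∈ S := by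
  obtain ⟨w⟩ := h.preconnected ⟨x, hx⟩ ⟨y, hy⟩
  refine ⟨w.map (Embedding.induce S).toHom, ?_⟩
  intro z hz
  have hz' := hz
  erw [Walk.support_map, List.mem_map] at hz'
  obtain ⟨z', -, rfl⟩ := hz'
  exact z'.2

/-- A set is connected if each of its points is joined within it to a connected subset. -/
lemma connected_of {S T : Set V} (hST : S ⊆ T) (hS : (G.induce S).Connected)
    (h : ∀ x ∈ T, ∃ y ∈ S, ∃ w : G.Walk x y, ∀ z ∈ w.support, z ∈ T) :
    (G.induce T).Connected := by
  obtain ⟨s, hs⟩ := hS.nonempty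
  have key : ∀ x (hx : x ∈ T), (G.induce T).Reachable ⟨x, hx⟩ ⟨s, hST hs⟩ := by
    intro x hx
    obtain ⟨y, hy, w, hw⟩ := h x hx
    obtain ⟨w', hw'⟩ := exists_walk hS hy hs
    exact Reachable.trans ⟨w.induce T hw⟩ ⟨w'.induce T fun z hz => hST (hw' z hz)⟩
  haveI : Nonempty T := ⟨⟨s, hST hs⟩⟩
  exact ⟨fun x y => (key x.1 x.2).trans (key y.1 y.2).symm⟩

/-- A path between two vertices of a block lies within the block. -/
lemma path_in_block {S : Set V} (hS : isBlock G S) {u v : V} (hu : u ∈ S) (hv : v ∈ S)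
    (p : G.Walk v u) (hp : p.IsPath) : ∀ x ∈ p.support, x ∈ S := by
  have key : inseparableOn G (S ∪ {x | x ∈ p.support}) := by
    refine ⟨?_, ?_⟩
    · refine connected_of Set.subset_union_left hS.1.1 ?_
      rintro x (hx | hx)
      · exact ⟨x, hx, Walk.nil, by simp [hx]⟩
      · obtain ⟨q, r, rfl⟩ := Walk.mem_support_iff_exists_append.1 hx
        exact ⟨u, hu, r, fun z hz => Or.inr (by simp [Walk.mem_support_append_iff, hz])⟩
    · intro w hw
      have hSw : (G.induce (S \ {w})).Connected := by
        by_cases h : w ∈ S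
        · exact hS.1.2 w h
        · rw [Set.diff_singleton_eq_self h]; exact hS.1.1
      refine connected_of (Set.diff_subset_diff_left Set.subset_union_left) hSw ?_
      rintro x ⟨hx | hx, hxw⟩
      · exact ⟨x, ⟨hx, hxw⟩, Walk.nil, by simpa using ⟨Or.inl hx, hxw⟩⟩
      · obtain ⟨q, r, rfl⟩ := Walk.mem_support_iff_exists_append.1 hx
        by_cases hwr : w ∈ r.support
        · have hwq : w ∉ q.support := fun h =>
            hxw (isPath_append_meet hp w h hwr).symm
          refine ⟨v, ⟨hv, ?_⟩, q.reverse, ?_⟩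
          · rintro rfl; exact hwq q.start_mem_support
          · intro z hz
            rw [Walk.support_reverse, List.mem_reverse] at hz
            refine ⟨Or.inr (by simp [Walk.mem_support_append_iff, hz]), ?_⟩
            rintro rfl; exact hwq hz
        · refine ⟨u, ⟨hu, ?_⟩, r, ?_⟩
          · rintro rfl; exact hwr r.end_mem_support
          · intro z hz
            refine ⟨Or.inr (by simp [Walk.mem_support_append_iff, hz]), ?_⟩
            rintro rfl; exact hwr hz
  have h := hS.2 _ Set.subset_union_left key
  intro x hx
  rw [← h]
  exact Or.inr hx

/-- Any two vertices of `T` are joined within `T` by paths of both signs, with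
length at least two if the two vertices are the ends of `e`. -/
def Rich (G : SimpleGraph V) (σ : Sym2 V → ℤˣ) (e : Sym2 V) (T : Set V) : Prop :=
  ∀ a ∈ T, ∀ b ∈ T, a ≠ b → ∀ s : ℤˣ, ∃ p : G.Walk a b, p.IsPath ∧
    (∀ x ∈ p.support, x ∈ T) ∧ walkSign G σ p = s ∧ (s(a, b) = e → 2 ≤ p.length)

lemma length_pos {a b : V} (p : G.Walk a b) (h : a ≠ b) : 1 ≤ p.length := by
  cases p with
  | nil => exact absurd rfl h
  | cons h p => simp

lemma two_le_length {a b : V} {e : Sym2 V} (p : G.Walk a b) (hab : a ≠ b)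
    (he : e ∉ p.edges) : s(a, b) = e → 2 ≤ p.length := by
  rintro rfl
  cases p with
  | nil => exact absurd rfl hab
  | cons h p =>
    cases p with
    | nil => simp at he
    | cons h p => simp

lemma rich_cycle {c : V} {e : Sym2 V} (d : G.Walk c c) (hd : d.IsCycle)
    (hs : walkSign G σ d = -1) (he : e ∉ d.edges) : Rich G σ e {x | x ∈ d.support} := by
  classical
  intro a ha b hb hab s
  set d' := d.rotate a ha with hd'
  have hc' : d'.IsCycle := (Walk.isCycle_rotate ha).2 hd
  have hs' : walkSign G σ d' = -1 := by
    rw [← hs, hd', walkSign, walkSign]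
    exact ((d.rotate_edges a ha).perm.map σ).prod_eq
  have he' : e ∉ d'.edges := fun h => he ((d.rotate_edges a ha).mem_iff.1 h)
  have hsup : ∀ x ∈ d'.support, x ∈ d.support := fun x hx =>
    (Walk.mem_support_rotate_iff d a ha).1 hx
  have hb' : b ∈ d'.support := (Walk.mem_support_rotate_iff d a ha).2 hb
  clear_value d'
  obtain ⟨q, r, rfl⟩ := Walk.mem_support_iff_exists_append.1 hb'
  have hq : q.IsPath := hc'.isPath_of_append_left (Walk.not_nil_of_ne hab.symm)
  have hr : r.IsPath := hc'.isPath_of_append_right (Walk.not_nil_of_ne hab)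
  rw [sign_append] at hs'
  rw [Walk.edges_append, List.mem_append, not_or] at he'
  have : walkSign G σ q = s ∨ walkSign G σ r = s := by
    rcases Int.units_eq_one_or (walkSign G σ q) with h1 | h1 <;>
    rcases Int.units_eq_one_or (walkSign G σ r) with h2 | h2 <;>
    rcases Int.units_eq_one_or s with h3 | h3 <;> simp_all
  rcases this with h | h
  · exact ⟨q, hq, fun x hx => hsup x (by simp [Walk.mem_support_append_iff, hx]), h,
      two_le_length q hab he'.1⟩
  · refine ⟨r.reverse, hr.reverse, fun x hx => hsup x ?_, by rw [sign_reverse, h],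
      two_le_length _ hab (by simpa using he'.2)⟩
    rw [Walk.support_reverse, List.mem_reverse] at hx
    simp [Walk.mem_support_append_iff, hx]

/-- Adding an ear preserves richness. -/
lemma rich_ear {e : Sym2 V} {T : Set V} (hT : Rich G σ e T) {x y : V} (hx : x ∈ T)
    (hy : y ∈ T) (hxy : x ≠ y) (q : G.Walk x y) (hq : q.IsPath)
    (hqT : ∀ z ∈ q.support, z ∈ T → z = x ∨ z = y) :
    Rich G σ e (T ∪ {z | z ∈ q.support}) := by
  -- symmetry
  have symm : ∀ a b : V, (∀ s : ℤˣ, ∃ p : G.Walk a b, p.IsPath ∧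
      (∀ z ∈ p.support, z ∈ T ∪ {z | z ∈ q.support}) ∧ walkSign G σ p = s ∧
      (s(a, b) = e → 2 ≤ p.length)) → (∀ s : ℤˣ, ∃ p : G.Walk b a, p.IsPath ∧
      (∀ z ∈ p.support, z ∈ T ∪ {z | z ∈ q.support}) ∧ walkSign G σ p = s ∧
      (s(b, a) = e → 2 ≤ p.length)) := by
    intro a b h s
    obtain ⟨p, h1, h2, h3, h4⟩ := h s
    refine ⟨p.reverse, h1.reverse, by simpa using h2, by rw [sign_reverse, h3], ?_⟩
    rw [Walk.length_reverse, Sym2.eq_swap]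
    exact h4
  -- one vertex off `T`, one in `T`
  have mixed : ∀ a b : V, a ∈ q.support → a ∉ T → b ∈ T → ∀ s : ℤˣ, ∃ p : G.Walk a b,
      p.IsPath ∧ (∀ z ∈ p.support, z ∈ T ∪ {z | z ∈ q.support}) ∧ walkSign G σ p = s ∧
      (s(a, b) = e → 2 ≤ p.length) := by
    intro a b ha haT hb s
    have hax : a ≠ x := by rintro rfl; exact haT hx
    have hay : a ≠ y := by rintro rfl; exact haT hy
    obtain ⟨q1, q2, rfl⟩ := Walk.mem_support_iff_exists_append.1 ha
    have hmeet := isPath_append_meet hq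
    have h1 : q1.IsPath := hq.of_append_left
    have h2 : q2.IsPath := hq.of_append_right
    by_cases hbx : x = b
    · subst hbx
      obtain ⟨p, p1, p2, p3, p4⟩ := hT y hy x hb hxy.symm (walkSign G σ q2 * s)
      refine ⟨q2.append p, isPath_append h2 p1 ?_, ?_, ?_, ?_⟩
      · intro z hz hz'
        rcases hqT z (by simp [Walk.mem_support_append_iff, hz]) (p2 z hz') with rfl | h
        · exact absurd (hmeet _ q1.start_mem_support hz).symm hax
        · exact h
      · intro z hz
        rw [Walk.mem_support_append_iff] at hz
        rcases hz with hz | hz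
        · exact Or.inr (by simp [Walk.mem_support_append_iff, hz])
        · exact Or.inl (p2 z hz)
      · rw [sign_append, p3, ← mul_assoc, unit_sq, one_mul]
      · intro _
        have := length_pos q2 hay
        have := length_pos p hxy.symm
        rw [Walk.length_append]; omega
    · obtain ⟨p, p1, p2, p3, p4⟩ := hT x hx b hb hbx (walkSign G σ q1 * s)
      refine ⟨q1.reverse.append p, isPath_append h1.reverse p1 ?_, ?_, ?_, ?_⟩
      · intro z hz hz'
        rw [Walk.support_reverse, List.mem_reverse] at hz
        rcases hqT z (by simp [Walk.mem_support_append_iff, hz]) (p2 z hz') with h | rfl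
        · exact h
        · exact absurd (hmeet _ hz q2.end_mem_support).symm hay
      · intro z hz
        rw [Walk.mem_support_append_iff, Walk.support_reverse, List.mem_reverse] at hz
        rcases hz with hz | hz
        · exact Or.inr (by simp [Walk.mem_support_append_iff, hz])
        · exact Or.inl (p2 z hz)
      · rw [sign_append, sign_reverse, p3, ← mul_assoc, unit_sq, one_mul]
      · intro _
        have := length_pos q1 hax.symm
        have := length_pos p hbx
        rw [Walk.length_append, Walk.length_reverse]; omega
  -- both off `T`, in order along the ear
  have off : ∀ (a b : V) (q1 : G.Walk x a) (q2 : G.Walk a b) (q3 : G.Walk b y),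
      q = q1.append (q2.append q3) → a ≠ b → a ∉ T → b ∉ T → ∀ s : ℤˣ, ∃ p : G.Walk a b,
      p.IsPath ∧ (∀ z ∈ p.support, z ∈ T ∪ {z | z ∈ q.support}) ∧ walkSign G σ p = s ∧
      (s(a, b) = e → 2 ≤ p.length) := by
    intro a b q1 q2 q3 hqe hab haT hbT s
    have hax : a ≠ x := by rintro rfl; exact haT hx
    have hay : a ≠ y := by rintro rfl; exact haT hy
    have hbx : b ≠ x := by rintro rfl; exact hbT hx
    have hby : b ≠ y := by rintro rfl; exact hbT hy
    subst hqe
    have m1 := isPath_append_meet hq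
    have h1 : q1.IsPath := hq.of_append_left
    have h23 : (q2.append q3).IsPath := hq.of_append_right
    have m2 := isPath_append_meet h23
    have h3 : q3.IsPath := h23.of_append_right
    have i3 : ∀ z ∈ q3.support, z ∈ (q2.append q3).support := fun z hz => by
      simp [Walk.mem_support_append_iff, hz]
    have m13 : ∀ z ∈ q1.support, z ∉ q3.support := by
      intro z hz hz3
      have := m1 z hz (i3 z hz3)
      subst this
      exact hab (m2 _ q2.start_mem_support hz3)
    obtain ⟨p, p1, p2, p3, p4⟩ := hT x hx y hy hxy (walkSign G σ q1 * walkSign G σ q3 * s)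
    have hin1 : ∀ z ∈ q1.support, z ∈ (q1.append (q2.append q3)).support := fun z hz => by
      simp [Walk.mem_support_append_iff, hz]
    have hin3 : ∀ z ∈ q3.support, z ∈ (q1.append (q2.append q3)).support := fun z hz => by
      simp [Walk.mem_support_append_iff, hz]
    have hA : (p.append q3.reverse).IsPath := by
      refine isPath_append p1 h3.reverse ?_
      intro z hz hz'
      rw [Walk.support_reverse, List.mem_reverse] at hz'
      rcases hqT z (hin3 z hz') (p2 z hz) with rfl | h
      · exact absurd hz' (m13 _ q1.start_mem_support)
      · exact h
    refine ⟨q1.reverse.append (p.append q3.reverse), isPath_append h1.reverse hA ?_, ?_, ?_, ?_⟩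
    · intro z hz hz'
      rw [Walk.support_reverse, List.mem_reverse] at hz
      rw [Walk.mem_support_append_iff, Walk.support_reverse, List.mem_reverse] at hz'
      rcases hz' with hz' | hz'
      · rcases hqT z (hin1 z hz) (p2 z hz') with h | rfl
        · exact h
        · exact absurd q3.end_mem_support (m13 _ hz)
      · exact absurd hz' (m13 _ hz)
    · intro z hz
      rw [Walk.mem_support_append_iff, Walk.mem_support_append_iff, Walk.support_reverse,
        List.mem_reverse, Walk.support_reverse, List.mem_reverse] at hz
      rcases hz with hz | hz | hz
      · exact Or.inr (hin1 z hz)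
      · exact Or.inl (p2 z hz)
      · exact Or.inr (hin3 z hz)
    · rw [sign_append, sign_append, sign_reverse, sign_reverse, p3]
      rcases Int.units_eq_one_or (walkSign G σ q1) with h1 | h1 <;>
      rcases Int.units_eq_one_or (walkSign G σ q3) with h2 | h2 <;> simp [h1, h2]
    · intro _
      have := length_pos q1 hax.symm
      have := length_pos p hxy
      rw [Walk.length_append, Walk.length_append, Walk.length_reverse]; omega
  intro a ha b hb hab
  by_cases haT : a ∈ T
  · by_cases hbT : b ∈ T
    · intro s
      obtain ⟨p, p1, p2, p3, p4⟩ := hT a haT b hbT hab s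
      exact ⟨p, p1, fun z hz => Or.inl (p2 z hz), p3, p4⟩
    · exact symm _ _ (mixed b a (hb.resolve_left hbT) hbT haT)
  · have ha' : a ∈ q.support := ha.resolve_left haT
    by_cases hbT : b ∈ T
    · exact mixed a b ha' haT hbT
    · have hb' : b ∈ q.support := hb.resolve_left hbT
      obtain ⟨q1, q2, hqe⟩ := Walk.mem_support_iff_exists_append.1 ha'
      rw [hqe, Walk.mem_support_append_iff] at hb'
      rcases hb' with hb' | hb'
      · obtain ⟨r1, r2, rfl⟩ := Walk.mem_support_iff_exists_append.1 hb'
        exact symm _ _ (off b a r1 r2 q2 (by rw [hqe, Walk.append_assoc]) hab.symm hbT haT)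
      · obtain ⟨r1, r2, rfl⟩ := Walk.mem_support_iff_exists_append.1 hb'
        exact off a b q1 r1 r2 hqe hab haT hbT

/-- The part of a walk up to its first vertex in `T`. -/
lemma first_hit {T : Set V} {z y : V} (w : G.Walk z y) (hy : y ∈ T) :
    ∃ y' ∈ T, ∃ p : G.Walk z y', (∀ x ∈ p.support, x ∈ w.support) ∧
      ∀ x ∈ p.support, x ∈ T → x = y' := by
  induction w with
  | nil => exact ⟨_, hy, Walk.nil, by simp, by simp⟩
  | @cons a b c h w ih =>
    by_cases ha : a ∈ T
    · exact ⟨a, ha, Walk.nil, by simp, by simp⟩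
    · obtain ⟨y', hy', p, h1, h2⟩ := ih hy
      refine ⟨y', hy', Walk.cons h p, ?_, ?_⟩
      · intro x hx
        rw [Walk.support_cons, List.mem_cons] at hx ⊢
        exact hx.imp id (h1 x)
      · intro x hx hxT
        rw [Walk.support_cons, List.mem_cons] at hx
        rcases hx with rfl | hx
        · exact absurd hxT ha
        · exact h2 x hx hxT

/-- A walk from `T` out of `T` leaves it along some edge. -/
lemma exit_edge {T : Set V} {a b : V} (w : G.Walk a b) (ha : a ∈ T) (hb : b ∉ T) :
    ∃ x ∈ T, ∃ z, z ∉ T ∧ z ∈ w.support ∧ G.Adj x z := by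
  induction w with
  | nil => exact absurd ha hb
  | @cons a c b h w ih =>
    by_cases hc : c ∈ T
    · obtain ⟨x, hx, z, h1, h2, h3⟩ := ih hc hb
      exact ⟨x, hx, z, h1, by simp [h2], h3⟩
    · exact ⟨a, ha, c, hc, by simp, h⟩

lemma exists_ear {S T : Set V} (hS : inseparableOn G S) (hTS : T ⊆ S) {a b t : V}
    (ha : a ∈ T) (hb : b ∈ T) (hab : a ≠ b) (ht : t ∈ S) (htT : t ∉ T) :
    ∃ x ∈ T, ∃ y ∈ T, x ≠ y ∧ ∃ q : G.Walk x y, q.IsPath ∧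
      (∀ z ∈ q.support, z ∈ T → z = x ∨ z = y) ∧ (∀ z ∈ q.support, z ∈ S) ∧
      ∃ z ∈ q.support, z ∉ T := by
  classical
  obtain ⟨w, hw⟩ := exists_walk hS.1 (hTS ha) ht
  obtain ⟨x, hx, z, hzT, hzw, hxz⟩ := exit_edge w ha htT
  have hzS : z ∈ S := hw z hzw
  obtain ⟨c, hc, hcx⟩ : ∃ c ∈ T, c ≠ x := by
    by_cases h : a = x
    · exact ⟨b, hb, fun h' => hab (h.trans h'.symm)⟩
    · exact ⟨a, ha, h⟩
  obtain ⟨w', hw'⟩ := exists_walk (hS.2 x (hTS hx)) (x := z) (y := c)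
    ⟨hzS, hxz.ne'⟩ ⟨hTS hc, hcx⟩
  obtain ⟨y, hy, p, p1, p2⟩ := first_hit w' hc
  have hb : ∀ v ∈ p.bypass.support, v ∈ p.support := fun v hv =>
    p.support_bypass_subset_support hv
  have hxp : x ∉ p.support := fun h => (hw' x (p1 x h)).2 rfl
  refine ⟨x, hx, y, hy, ?_, Walk.cons hxz p.bypass, ?_, ?_, ?_, z, by simp, hzT⟩
  · rintro rfl; exact hxp p.end_mem_support
  · exact (Walk.cons_isPath_iff _ _).2 ⟨p.bypass_isPath, fun h => hxp (hb x h)⟩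
  · intro v hv hvT
    rw [Walk.support_cons, List.mem_cons] at hv
    exact hv.imp id fun hv => p2 v (hb v hv) hvT
  · intro v hv
    rw [Walk.support_cons, List.mem_cons] at hv
    rcases hv with rfl | hv
    · exact hTS hx
    · exact (hw' v (p1 v (hb v hv))).1

lemma rich_block [Fintype V] {e : Sym2 V} {S : Set V} (hS : inseparableOn G S) {c : V}
    (d : G.Walk c c) (hd : d.IsCycle) (hdS : ∀ x ∈ d.support, x ∈ S)
    (hs : walkSign G σ d = -1) (he : e ∉ d.edges) : Rich G σ e S := by
  obtain ⟨T, hdT, hT⟩ := Finite.exists_le_maximal (p := fun T : Set V => T ⊆ S ∧ Rich G σ e T)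
    (a := {x | x ∈ d.support}) ⟨hdS, rich_cycle d hd hs he⟩
  have hTS : T = S := by
    refine hT.prop.1.antisymm ?_
    by_contra hcon
    obtain ⟨t, ht, htT⟩ := Set.not_subset.1 hcon
    have h1 : c ∈ T := hdT d.start_mem_support
    have h2 : d.snd ∈ T := hdT (d.getVert_mem_support 1)
    obtain ⟨x, hx, y, hy, hxy, q, q1, q2, q3, z, hz, hzT⟩ :=
      exists_ear hS hT.prop.1 h1 h2 (d.adj_snd hd.not_nil).ne ht htT
    have := hT.le_of_ge (y := T ∪ {z | z ∈ q.support})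
      ⟨Set.union_subset hT.prop.1 q3, rich_ear hT.prop.2 hx hy hxy q q1 q2⟩
      Set.subset_union_left
    exact hzT (this (Or.inr hz))
  exact hTS ▸ hT.prop.2

end SignedAux

/-- An edge of a signed graph lies in a positive circle iff it is not an isthmus (it lies
in some circle) and either its block is balanced, or its block is unbalanced and the edge
is not a balancing edge of that block (some negative circle of the block avoids it). -/
theorem edge_in_positive_circle_iff {V : Type*} [Fintype V]
    (G : SimpleGraph V) (σ : Sym2 V → ℤˣ) {u v : V} (huv : G.Adj u v)
    (S : Set V) (hS : isBlock G S) (hu : u ∈ S) (hv : v ∈ S) :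
    (∃ (a : V) (w : G.Walk a a), w.IsCycle ∧ s(u, v) ∈ w.edges ∧
        walkSign G σ w = 1) ↔
      ((∃ (a : V) (w : G.Walk a a), w.IsCycle ∧ s(u, v) ∈ w.edges) ∧
        (balancedOn G σ S ∨
          (¬ balancedOn G σ S ∧
            ∃ (a : V) (w : G.Walk a a), w.IsCycle ∧ (∀ x ∈ w.support, x ∈ S) ∧
              walkSign G σ w = -1 ∧ s(u, v) ∉ w.edges))) := by
  open SignedAux SimpleGraph in
  constructor
  · rintro ⟨a, w, hw, he, hs⟩
    refine ⟨⟨a, w, hw, he⟩, ?_⟩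
    by_cases hbal : balancedOn G σ S
    · exact Or.inl hbal
    refine Or.inr ⟨hbal, ?_⟩
    have hbal' := hbal
    unfold balancedOn at hbal'
    push Not at hbal'
    obtain ⟨b, d, hd, hdS, hds⟩ := hbal'
    have hds' : walkSign G σ d = -1 := (Int.units_eq_one_or _).resolve_left hds
    by_cases hed : s(u, v) ∈ d.edges
    · obtain ⟨p, p1, p2, p3, -⟩ := cycle_to_path (σ := σ) w hw he
      obtain ⟨q, q1, q2, q3, -⟩ := cycle_to_path (σ := σ) d hd hed
      have hsgn : walkSign G σ (p.append q.reverse) = -1 := by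
        rw [sign_append, sign_reverse]
        rw [hs] at p3
        rw [hds'] at q3
        calc walkSign G σ p * walkSign G σ q
            = (σ s(u, v) * σ s(u, v)) * (walkSign G σ p * walkSign G σ q) := by
              rw [unit_sq, one_mul]
          _ = (σ s(u, v) * walkSign G σ p) * (σ s(u, v) * walkSign G σ q) := by ac_rfl
          _ = -1 := by rw [← p3, ← q3, one_mul]
      rcases walk_reduce (σ := σ) (p.append q.reverse) with
        ⟨c, r, r1, r2, r3, r4⟩ | ⟨r, r1, r2, -, -⟩
      · refine ⟨c, r, r1, ?_, r2, ?_⟩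
        · intro x hx
          have := r3 x hx
          rw [Walk.mem_support_append_iff, Walk.support_reverse, List.mem_reverse] at this
          exact this.elim (path_in_block hS hu hv p p1 x) (path_in_block hS hu hv q q1 x)
        · intro h
          have := r4 _ h
          rw [Walk.edges_append, List.mem_append, Walk.edges_reverse, List.mem_reverse] at this
          exact this.elim p2 q2
      · rw [Walk.isPath_iff_eq_nil.1 r1, sign_nil, hsgn] at r2
        exact absurd r2 (by decide)
    · exact ⟨b, d, hd, hdS, hds', hed⟩
  · rintro ⟨⟨a, w, hw, he⟩, hbal | ⟨-, b, d, hd, hdS, hds, hed⟩⟩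
    · refine ⟨a, w, hw, he, hbal w hw ?_⟩
      obtain ⟨p, p1, -, -, p4⟩ := cycle_to_path (σ := σ) w hw he
      exact fun x hx => path_in_block hS hu hv p p1 x (p4 x hx)
    · obtain ⟨p, p1, -, p3, p4⟩ :=
        rich_block (e := s(u, v)) hS.1 d hd hdS hds hed v hv u hu huv.ne' (σ s(u, v))
      have hep : s(u, v) ∉ p.edges := by
        intro h
        have h1 := (path_edge (σ := σ) p p1 h).1
        have h2 := p4 Sym2.eq_swap
        omega
      refine ⟨u, Walk.cons huv p, (Walk.cons_isCycle_iff p huv).2 ⟨p1, hep⟩, by simp, ?_⟩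
      rw [sign_cons, p3, unit_sq]
end

section
/- Let Σ be a signed graph and v a vertex of Σ. There is a negative circle of Σ containing v if and only if v belongs to an unbalanced block of Σ. -/
open SimpleGraph in
/-- The vertex set of a cycle is inseparable. -/
theorem cycle_inseparable {V : Type*} (G : SimpleGraph V) {a : V} (w : G.Walk a a)
    (hw : w.IsCycle) : inseparableOn G {x | x ∈ w.support} := by
  classical
  refine ⟨w.connected_induce_support, ?_⟩
  intro x hx
  have hx' : x ∈ w.support := hx
  have hc : (w.rotate x hx').IsCycle := hw.rotate hx'
  have hs : ∀ y, y ∈ (w.rotate x hx').support ↔ y ∈ w.support := fun y => by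
    simp
  generalize w.rotate x hx' = c at hc hs
  cases c with
  | nil => simp at hc
  | @cons _ y _ h p =>
    have hp := (Walk.cons_isCycle_iff p h).1 hc
    have hnn : ¬ p.Nil := Walk.not_nil_of_ne h.ne'
    have hset : ({z | z ∈ w.support} \ {x} : Set V) = {z | z ∈ p.dropLast.support} := by
      ext z
      have h1 := p.dropLast_support_concat
      have h2 := hp.1.support_nodup
      have h3 := p.support_dropLast hnn
      have h4 := hs z
      rw [Walk.support_cons] at h4
      rw [← h1] at h2 h4
      simp only [Set.mem_diff, Set.mem_setOf_eq, Set.mem_singleton_iff, h3]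
      grind
    rw [hset]
    exact p.dropLast.connected_induce_support

open SimpleGraph in
/-- A walk ending in `T` contains a path whose only vertex in `T` is its end. -/
theorem exists_first_hit {V : Type*} (G : SimpleGraph V) (T : Set V) {x y : V}
    (p : G.Walk x y) (hy : y ∈ T) :
    ∃ (z : V) (q : G.Walk x z), z ∈ T ∧ q.IsPath ∧ q.support ⊆ p.support ∧
      ∀ t ∈ q.support, t ∈ T → t = z := by
  classical
  suffices h : ∃ (z : V) (q : G.Walk x z), z ∈ T ∧ q.support ⊆ p.support ∧
      ∀ t ∈ q.support, t ∈ T → t = z by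
    obtain ⟨z, q, hz, hq, ht⟩ := h
    exact ⟨z, q.bypass, hz, q.bypass_isPath, fun t h => hq (q.support_bypass_subset_support h),
      fun t h => ht t (q.support_bypass_subset_support h)⟩
  induction p with
  | nil => exact ⟨_, Walk.nil, hy, by simp, by simp⟩
  | @cons a b c h p ih =>
    by_cases ha : a ∈ T
    · exact ⟨a, Walk.nil, ha, by simp, by simp⟩
    · obtain ⟨z, q, hz, hq, ht⟩ := ih hy
      refine ⟨z, Walk.cons h q, hz, ?_, ?_⟩
      · simp only [Walk.support_cons]
        exact List.cons_subset_cons _ hq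
      · intro t h1 h2
        rw [Walk.support_cons, List.mem_cons] at h1
        rcases h1 with rfl | h1
        · exact absurd h2 ha
        · exact ht t h1 h2

open SimpleGraph in
/-- Building a cycle from an edge and two paths. -/
theorem theta_cycle {V : Type*} (G : SimpleGraph V) (T : Set V) {u v z : V} (h : G.Adj u v)
    (q : G.Walk v z) (r : G.Walk z u) (hq : q.IsPath) (hr : r.IsPath) (hvT : v ∉ T)
    (huq : u ∉ q.support) (hrT : ∀ t ∈ r.support, t ∈ T)
    (hqT : ∀ t ∈ q.support, t ∈ T → t = z) : (Walk.cons h (q.append r)).IsCycle := by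
  rw [Walk.cons_isCycle_iff]
  constructor
  · apply Walk.IsPath.mk'
    rw [Walk.support_append]
    have h1 := hr.support_nodup
    rw [← Walk.cons_tail_support, List.nodup_cons] at h1
    refine List.Nodup.append hq.support_nodup h1.2 ?_
    intro t ht1 ht2
    have := hqT t ht1 (hrT t (List.mem_of_mem_tail ht2))
    subst this
    exact h1.1 ht2
  · rw [Walk.edges_append, List.mem_append]
    rintro (h1 | h1)
    · exact huq (q.fst_mem_support_of_mem_edges h1)
    · exact hvT (hrT _ (r.snd_mem_support_of_mem_edges h1))

open SimpleGraph in
/-- A neighbour, in an inseparable set, of a vertex on a negative circle is on a negative circle. -/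
theorem negative_step {V : Type*} (G : SimpleGraph V) (σ : Sym2 V → ℤˣ) (S : Set V)
    (hS : inseparableOn G S) {u v : V} (hv : v ∈ S) (h : G.Adj u v)
    (hu : ∃ (w : G.Walk u u), w.IsCycle ∧ (∀ x ∈ w.support, x ∈ S) ∧ walkSign G σ w = -1) :
    ∃ (w : G.Walk v v), w.IsCycle ∧ (∀ x ∈ w.support, x ∈ S) ∧ walkSign G σ w = -1 := by
  classical
  -- enough to find a negative circle through `v` based anywhere
  suffices hh : ∃ (a : V) (w : G.Walk a a), w.IsCycle ∧ v ∈ w.support ∧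
      (∀ x ∈ w.support, x ∈ S) ∧ walkSign G σ w = -1 by
    obtain ⟨a, w, hw, hvw, hwS, hs⟩ := hh
    refine ⟨w.rotate v hvw, hw.rotate hvw, fun x hx => hwS x (by simpa using hx), ?_⟩
    rw [← hs]
    exact ((w.rotate_edges v hvw).perm.map σ).prod_eq
  obtain ⟨c, hc, hcS, hs⟩ := hu
  by_cases hvc : v ∈ c.support
  · exact ⟨u, c, hc, hvc, hcS, hs⟩
  have huS : u ∈ S := hcS u c.start_mem_support
  have hsnd : G.Adj u c.snd := c.adj_snd hc.not_nil
  have hsndc : c.snd ∈ c.support := c.getVert_mem_support 1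
  obtain ⟨p0⟩ := (hS.2 u huS).preconnected ⟨v, hv, h.ne'⟩ ⟨c.snd, hcS _ hsndc, hsnd.ne'⟩
  let p : G.Walk v c.snd := p0.map (Embedding.induce _).toHom
  have hp : ∀ x ∈ p.support, x ∈ S \ {u} := by
    intro x hx
    have hx' : x ∈ (p0.map (Embedding.induce (S \ {u})).toHom).support := hx
    rw [Walk.support_map, List.mem_map] at hx'
    obtain ⟨y, -, rfl⟩ := hx'
    exact y.2
  obtain ⟨z, q, hz, hq, hqp, hqT⟩ := exists_first_hit G {x | x ∈ c.support} p hsndc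
  have hqS : ∀ x ∈ q.support, x ∈ S \ {u} := fun x hx => hp x (hqp hx)
  have huq : u ∉ q.support := fun hx => (hqS u hx).2 rfl
  have hzu : z ≠ u := (hqS z q.end_mem_support).2
  have hz' : z ∈ c.support := hz
  have hspec := c.take_spec hz'
  have hAs : ∀ t ∈ (c.takeUntil z hz').support, t ∈ c.support :=
    fun t ht => c.support_takeUntil_subset_support hz' ht
  have hBs : ∀ t ∈ (c.dropUntil z hz').support, t ∈ c.support :=
    fun t ht => c.support_dropUntil_subset_support hz' ht
  generalize c.takeUntil z hz' = A at hspec hAs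
  generalize c.dropUntil z hz' = B at hspec hBs
  have hA : A.IsPath :=
    Walk.IsCycle.isPath_of_append_left (Walk.not_nil_of_ne hzu) (by rw [hspec]; exact hc)
  have hB : B.IsPath :=
    Walk.IsCycle.isPath_of_append_right (Walk.not_nil_of_ne hzu.symm) (by rw [hspec]; exact hc)
  have key : ∀ r : G.Walk z u, r.IsPath → (∀ t ∈ r.support, t ∈ c.support) →
      walkSign G σ (Walk.cons h (q.append r)) = -1 →
      ∃ (a : V) (w : G.Walk a a), w.IsCycle ∧ v ∈ w.support ∧
      (∀ x ∈ w.support, x ∈ S) ∧ walkSign G σ w = -1 := by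
    intro r hr hrc hsr
    refine ⟨u, Walk.cons h (q.append r), theta_cycle G {x | x ∈ c.support} h q r hq hr hvc huq hrc
      hqT, ?_, ?_, hsr⟩
    · simp
    · intro x hx
      rw [Walk.support_cons, List.mem_cons, Walk.mem_support_append_iff] at hx
      rcases hx with rfl | hx | hx
      · exact huS
      · exact (hqS x hx).1
      · exact hcS x (hrc x hx)
  have hAr : walkSign G σ (Walk.cons h (q.append A.reverse)) =
      σ s(u, v) * (walkSign G σ q * walkSign G σ A) := by
    simp [walkSign]
  have hBr : walkSign G σ (Walk.cons h (q.append B)) =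
      σ s(u, v) * (walkSign G σ q * walkSign G σ B) := by
    simp [walkSign]
  have hAB : walkSign G σ A * walkSign G σ B = -1 := by
    rw [← hs, ← hspec]
    simp [walkSign]
  rcases Int.units_eq_one_or (walkSign G σ (Walk.cons h (q.append A.reverse))) with h1 | h1
  · rcases Int.units_eq_one_or (walkSign G σ (Walk.cons h (q.append B))) with h2 | h2
    · exfalso
      rw [hAr] at h1
      rw [hBr] at h2
      rcases Int.units_eq_one_or (walkSign G σ A) with e1 | e1 <;>
      rcases Int.units_eq_one_or (walkSign G σ B) with e2 | e2 <;>
      rcases Int.units_eq_one_or (walkSign G σ q) with e3 | e3 <;>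
      rcases Int.units_eq_one_or (σ s(u, v)) with e4 | e4 <;>
      rw [e1, e2] at hAB <;> rw [e1, e3, e4] at h1 <;> rw [e2, e3, e4] at h2 <;>
      revert hAB h1 h2 <;> decide
    · exact key B hB hBs h2
  · exact key A.reverse hA.reverse (fun t ht => hAs t (by simpa using ht)) h1

/-- A vertex of a signed graph lies in a negative circle iff it belongs to an unbalanced
block. -/
theorem vertex_in_negative_circle_iff {V : Type*} [Fintype V]
    (G : SimpleGraph V) (σ : Sym2 V → ℤˣ) (v : V) :
    (∃ (a : V) (w : G.Walk a a), w.IsCycle ∧ v ∈ w.support ∧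
        walkSign G σ w = -1) ↔
      ∃ S : Set V, isBlock G S ∧ v ∈ S ∧ ¬ balancedOn G σ S := by
  classical
  constructor
  · rintro ⟨a, w, hw, hv, hs⟩
    have hfin : {T : Set V | inseparableOn G T}.Finite := Set.toFinite _
    obtain ⟨S, hle, hmax⟩ := hfin.exists_le_maximal (cycle_inseparable G w hw)
    refine ⟨S, ⟨hmax.prop, fun T hST hT => ?_⟩, hle hv, fun hb => ?_⟩
    · exact (hmax.eq_of_le hT hST).symm
    · have := hb w hw (fun x hx => hle hx)
      rw [hs] at this
      revert this
      decide
  · rintro ⟨S, ⟨hS, -⟩, hv, hb⟩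
    unfold balancedOn at hb
    push Not at hb
    obtain ⟨a, w, hw, hwS, hs⟩ := hb
    have hs' : walkSign G σ w = -1 := (Int.units_eq_one_or _).resolve_left hs
    have haS : a ∈ S := hwS a w.start_mem_support
    obtain ⟨p⟩ := hS.1.preconnected ⟨a, haS⟩ ⟨v, hv⟩
    have gen : ∀ (x y : S) (p : (G.induce S).Walk x y),
        (∃ (w : G.Walk x.1 x.1), w.IsCycle ∧ (∀ t ∈ w.support, t ∈ S) ∧ walkSign G σ w = -1) →
        (∃ (w : G.Walk y.1 y.1), w.IsCycle ∧ (∀ t ∈ w.support, t ∈ S) ∧ walkSign G σ w = -1) := by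
      intro x y p
      induction p with
      | nil => exact id
      | @cons x y z h p ih =>
        intro hx
        exact ih (negative_step G σ S hS y.2 (SimpleGraph.induce_adj.1 h) hx)
    obtain ⟨w', h1, -, h3⟩ := gen _ _ p ⟨w, hw, hwS, hs'⟩
    exact ⟨v, w', h1, w'.start_mem_support, h3⟩
end

section
/- Let Σ be a signed graph and v a vertex of Σ. There is a positive circle of Σ containing v if and only if either v belongs to a balanced block that is not K_1 or K_2, or v belongs to an unbalanced block in which v is not a balancing vertex of degree 2. -/
open SimpleGraph

namespace SignedCircle

variable {V : Type*} {G : SimpleGraph V} {σ : Sym2 V → ℤˣ}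

lemma sign_nil (u : V) : walkSign G σ (Walk.nil : G.Walk u u) = 1 := by simp [walkSign]

lemma sign_cons {u v w : V} (h : G.Adj u v) (p : G.Walk v w) :
    walkSign G σ (Walk.cons h p) = σ s(u, v) * walkSign G σ p := by simp [walkSign]

lemma sign_append {u v w : V} (p : G.Walk u v) (q : G.Walk v w) :
    walkSign G σ (p.append q) = walkSign G σ p * walkSign G σ q := by simp [walkSign]

lemma sign_reverse {u v : V} (p : G.Walk u v) :
    walkSign G σ p.reverse = walkSign G σ p := by
  simp [walkSign, List.prod_reverse]

lemma sign_rotate [DecidableEq V] {u v : V} (p : G.Walk v v) (h : u ∈ p.support) :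
    walkSign G σ (p.rotate u h) = walkSign G σ p := by
  unfold walkSign
  exact ((p.rotate_edges u h).perm.map σ).prod_eq

lemma sq_unit (a : ℤˣ) : a * a = 1 := Int.units_mul_self a

/-- In a balanced set every walk has the same sign as the path obtained by bypassing. -/
lemma sign_bypass [DecidableEq V] {T : Set V} (hT : balancedOn G σ T) {a b : V}
    (w : G.Walk a b) (hw : ∀ x ∈ w.support, x ∈ T) :
    walkSign G σ w.bypass = walkSign G σ w := by
  induction w with
  | nil => rfl
  | @cons a b c h p ih =>
    have ih := ih (fun x hx => hw x (by simp [hx]))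
    simp only [Walk.bypass]
    split_ifs with hs
    · rw [sign_cons, ← ih]
      have key : σ s(a, b) * walkSign G σ (p.bypass.takeUntil a hs) = 1 := by
        have hp : (p.bypass.takeUntil a hs).IsPath := p.bypass_isPath.takeUntil hs
        by_cases he : s(a, b) ∈ (p.bypass.takeUntil a hs).edges
        · rw [hp.eq_adj_toWalk_of_mem_edges (by rwa [Sym2.eq_swap])]
          simp only [Adj.toWalk]
          rw [sign_cons, sign_nil, Sym2.eq_swap, mul_one, sq_unit]
        · rw [← sign_cons h]
          refine hT _ ((Walk.cons_isCycle_iff _ h).2 ⟨hp, he⟩) ?_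
          intro x hx
          apply hw
          rw [Walk.support_cons, List.mem_cons] at hx ⊢
          rcases hx with hx | hx
          · exact Or.inl hx
          · exact Or.inr (p.support_bypass_subset_support
              (p.bypass.support_takeUntil_subset_support hs hx))
      have h2 : walkSign G σ p.bypass = walkSign G σ (p.bypass.takeUntil a hs) *
          walkSign G σ (p.bypass.dropUntil a hs) := by
        rw [← sign_append, Walk.take_spec]
      rw [h2, ← mul_assoc, key, one_mul]
    · rw [sign_cons, sign_cons, ih]

lemma sign_closed {T : Set V} (hT : balancedOn G σ T) {a : V}
    (w : G.Walk a a) (hw : ∀ x ∈ w.support, x ∈ T) : walkSign G σ w = 1 := by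
  classical
  rw [← sign_bypass hT w hw, (Walk.isPath_iff_eq_nil).1 w.bypass_isPath, sign_nil]

lemma sign_eq {T : Set V} (hT : balancedOn G σ T) {a b : V}
    (p q : G.Walk a b) (hp : ∀ x ∈ p.support, x ∈ T) (hq : ∀ x ∈ q.support, x ∈ T) :
    walkSign G σ p = walkSign G σ q := by
  have := sign_closed hT (p.append q.reverse) (by
    intro x hx
    rw [Walk.mem_support_append_iff] at hx
    rcases hx with hx | hx
    · exact hp x hx
    · exact hq x (by simpa using hx))
  rw [sign_append, sign_reverse] at this
  rw [mul_eq_one_iff_eq_inv.1 this, Int.units_inv_eq_self]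

/-- Connectivity of induced subgraphs gives paths. -/
lemma exists_path {T : Set V} (h : (G.induce T).Connected) {x y : V} (hx : x ∈ T) (hy : y ∈ T) :
    ∃ p : G.Walk x y, p.IsPath ∧ ∀ z ∈ p.support, z ∈ T := by
  classical
  obtain ⟨w⟩ := h.preconnected ⟨x, hx⟩ ⟨y, hy⟩
  let p : G.Walk x y := w.map (Embedding.induce T).toHom
  have hp : ∀ z ∈ p.support, z ∈ T := by
    intro z hz
    have hz : z ∈ (w.map (Embedding.induce T).toHom).support := hz
    rw [Walk.support_map, List.mem_map] at hz
    obtain ⟨a, -, rfl⟩ := hz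
    exact a.2
  exact ⟨p.bypass, p.bypass_isPath, fun z hz => hp z (p.support_bypass_subset_support hz)⟩

/-- Decomposition of a circle at a vertex. -/
lemma cycle_decomp {a v : V} (w : G.Walk a a) (hw : w.IsCycle) (hv : v ∈ w.support) :
    ∃ (x y : V) (q : G.Walk x y), G.Adj v x ∧ G.Adj v y ∧ x ≠ y ∧ v ∉ q.support ∧
      (∀ z, z ∈ w.support ↔ z = v ∨ z ∈ q.support) ∧
      walkSign G σ w = σ s(v, x) * walkSign G σ q * σ s(v, y) := by
  classical
  have hc := hw.rotate hv
  have hs := sign_rotate (σ := σ) w hv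
  have hm : ∀ z, z ∈ (w.rotate v hv).support ↔ z ∈ w.support :=
    fun z => Walk.mem_support_rotate_iff w v hv
  revert hc hs hm
  generalize w.rotate v hv = c
  intro hc hs hm
  cases c with
  | nil => exact absurd hc Walk.not_isCycle_nil
  | @cons _ x _ h p =>
    rw [Walk.cons_isCycle_iff] at hc
    obtain ⟨hp, he⟩ := hc
    rw [← hs]
    have hp' := hp.reverse
    obtain ⟨r, hr⟩ : ∃ r, r = p.reverse := ⟨_, rfl⟩
    rw [← hr] at hp'
    have hpr : p = r.reverse := by rw [hr, Walk.reverse_reverse]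
    subst hpr
    cases r with
    | nil => exact absurd rfl h.ne
    | @cons _ y _ h' q =>
      rw [Walk.cons_isPath_iff] at hp'
      refine ⟨x, y, q.reverse, h, h', ?_, by simpa using hp'.2, ?_, ?_⟩
      · rintro rfl
        apply he
        simp
      · intro z
        rw [← hm]
        simp only [Walk.support_cons, Walk.support_reverse, List.mem_cons, List.mem_reverse]
        tauto
      · rw [sign_cons, sign_reverse, sign_cons, sign_reverse, mul_assoc,
          mul_comm (σ s(v, y))]

lemma cycle_build {v x y : V} (hx : G.Adj v x) (hy : G.Adj v y) (hxy : x ≠ y)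
    (q : G.Walk x y) (hq : q.IsPath) (hv : v ∉ q.support) :
    ∃ w : G.Walk v v, w.IsCycle ∧ (∀ z, z ∈ w.support ↔ z = v ∨ z ∈ q.support) ∧
      walkSign G σ w = σ s(v, x) * walkSign G σ q * σ s(v, y) := by
  refine ⟨Walk.cons hx (q.concat hy.symm), ?_, ?_, ?_⟩
  · rw [Walk.cons_isCycle_iff]
    refine ⟨hq.concat hv hy.symm, ?_⟩
    rw [Walk.edges_concat]
    simp only [List.concat_eq_append, List.mem_append, List.mem_singleton]
    rintro (h | h)
    · exact hv (q.fst_mem_support_of_mem_edges h)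
    · rw [Sym2.eq_swap, Sym2.eq_iff] at h
      rcases h with h | h
      · exact hxy h.1
      · exact hx.ne h.1.symm
  · intro z
    simp [Walk.support_concat]
    tauto
  · rw [sign_cons, Walk.concat_eq_append, sign_append, sign_cons, sign_nil, mul_one, mul_assoc,
      Sym2.eq_swap (a := y)]

/-- The initial part of a path up to its first vertex in `X`. -/
lemma first_hit (X : Set V) {u w : V} (p : G.Walk u w) (hp : p.IsPath) (hw : w ∈ X) :
    ∃ (x : V) (q : G.Walk u x), x ∈ X ∧ q.IsPath ∧ q.support ⊆ p.support ∧
      q.length ≤ p.length ∧ ∀ y ∈ q.support, y ∈ X → y = x := by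
  induction p with
  | @nil u => exact ⟨u, Walk.nil, hw, hp, by simp, le_rfl, by simp⟩
  | @cons a b c h p ih =>
    by_cases ha : a ∈ X
    · exact ⟨a, Walk.nil, ha, Walk.IsPath.nil, by simp, by simp, by simp⟩
    · rw [Walk.cons_isPath_iff] at hp
      obtain ⟨x, q, hx, hq, hs, hl, hy⟩ := ih hp.1 hw
      refine ⟨x, Walk.cons h q, hx, hq.cons (fun h => hp.2 (hs h)), ?_, by simpa using hl, ?_⟩
      · rw [Walk.support_cons, Walk.support_cons]
        exact List.cons_subset_cons _ hs
      · intro y hmem hyX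
        rw [Walk.support_cons, List.mem_cons] at hmem
        rcases hmem with rfl | hmem
        · exact absurd hyX ha
        · exact hy y hmem hyX

/-- Vertex set of a circle is inseparable. -/
lemma cycle_insep {a : V} (w : G.Walk a a) (hw : w.IsCycle) :
    inseparableOn G {x | x ∈ w.support} := by
  refine ⟨w.connected_induce_support, ?_⟩
  intro v hv
  obtain ⟨x, y, q, -, -, -, hvq, hm, -⟩ := cycle_decomp (σ := fun _ => 1) w hw hv
  have : {x | x ∈ w.support} \ {v} = {x | x ∈ q.support} := by
    ext z
    simp only [Set.mem_diff, Set.mem_setOf_eq, Set.mem_singleton_iff, hm]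
    constructor
    · tauto
    · intro hz
      exact ⟨Or.inr hz, fun h => hvq (h ▸ hz)⟩
  rw [this]
  exact q.connected_induce_support

lemma exists_block [Finite V] {T : Set V} (hT : inseparableOn G T) :
    ∃ S, isBlock G S ∧ T ⊆ S := by
  obtain ⟨S, hTS, hS⟩ := (Set.toFinite {S | inseparableOn G S}).exists_le_maximal hT
  exact ⟨S, ⟨hS.prop, fun T' h h' => le_antisymm (hS.2 h' h) h⟩, hTS⟩

lemma cycle_card [Finite V] {a : V} (w : G.Walk a a) (hw : w.IsCycle) {S : Set V}
    (hS : ∀ x ∈ w.support, x ∈ S) : 3 ≤ S.ncard := by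
  obtain ⟨x, y, q, hx, hy, hxy, hvq, hm, -⟩ :=
    cycle_decomp (σ := fun _ => 1) w hw w.start_mem_support
  have : 2 < S.ncard := by
    rw [Set.two_lt_ncard]
    exact ⟨a, hS _ w.start_mem_support, x, hS _ ((hm x).2 (Or.inr q.start_mem_support)),
      y, hS _ ((hm y).2 (Or.inr q.end_mem_support)), hx.ne, hy.ne, hxy⟩
  exact this

/-- A connected set containing `v` and another vertex contains a neighbour of `v`. -/
lemma exists_nbr {T : Set V} (h : (G.induce T).Connected) {v z : V} (hv : v ∈ T) (hz : z ∈ T)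
    (hne : v ≠ z) : ∃ x ∈ T, G.Adj v x := by
  obtain ⟨p, -, hp⟩ := exists_path h hv hz
  cases p with
  | nil => exact absurd rfl hne
  | @cons _ b _ h' q => exact ⟨b, hp b (by simp), h'⟩

lemma two_nbrs [Finite V] {S : Set V} (hS : inseparableOn G S) (hc : 3 ≤ S.ncard) {v : V}
    (hv : v ∈ S) : ∃ x ∈ S, ∃ y ∈ S, G.Adj v x ∧ G.Adj v y ∧ x ≠ y := by
  obtain ⟨z, hz, hzv⟩ := Set.exists_ne_of_one_lt_ncard (by omega : 1 < S.ncard) v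
  obtain ⟨x, hx, hvx⟩ := exists_nbr hS.1 hv hz hzv.symm
  have h1 : 1 < (S \ {x}).ncard := by
    have := Set.ncard_diff_singleton_add_one hx
    omega
  obtain ⟨z', hz', hzv'⟩ := Set.exists_ne_of_one_lt_ncard h1 v
  obtain ⟨y, hy, hvy⟩ := exists_nbr (hS.2 x hx) (v := v) ⟨hv, hvx.ne⟩ hz' hzv'.symm
  exact ⟨x, hx, y, hy.1, hvx, hvy, fun h => hy.2 h.symm⟩

/-- Two nbrs of `v` in an inseparable set give a circle through `v`. -/
lemma cycle_of_nbrs {S : Set V} (hS : inseparableOn G S) {v x y : V}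
    (hv : v ∈ S) (hx : x ∈ S) (hy : y ∈ S) (hvx : G.Adj v x) (hvy : G.Adj v y) (hxy : x ≠ y) :
    ∃ q : G.Walk x y, (∀ z ∈ q.support, z ∈ S \ {v}) ∧
    ∃ w : G.Walk v v, w.IsCycle ∧ (∀ z ∈ w.support, z ∈ S) ∧
      walkSign G σ w = σ s(v, x) * walkSign G σ q * σ s(v, y) := by
  obtain ⟨q, hq, hqS⟩ := exists_path (hS.2 v hv) (x := x) (y := y)
    ⟨hx, hvx.ne'⟩ ⟨hy, hvy.ne'⟩
  obtain ⟨w, hw, hm, hs⟩ := cycle_build (σ := σ) hvx hvy hxy q hq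
    (fun h => (hqS v h).2 rfl)
  refine ⟨q, hqS, w, hw, ?_, hs⟩
  intro z hz
  rcases (hm z).1 hz with rfl | h
  · exact hv
  · exact (hqS z h).1

/-- A theta: a negative circle and a path internally disjoint from it. -/
lemma theta {c c' q : V} (A : G.Walk c c') (D : G.Walk c' c) (hA : A.IsPath) (hD : D.IsPath)
    (hl : 1 < D.length) (hAD : ∀ x ∈ A.support, x ∈ D.support → x = c ∨ x = c') :
    (A.append D).IsCycle := by
  refine hA.isCycle_append hD ?_ (Or.inr hl)
  intro x hxA hxD
  have h1 := hA.support_nodup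
  have h2 := hD.support_nodup
  rw [← Walk.cons_tail_support] at h1 h2
  rcases hAD x (List.mem_of_mem_tail hxA) (List.mem_of_mem_tail hxD) with rfl | rfl
  · exact (List.nodup_cons.1 h1).1 hxA
  · exact (List.nodup_cons.1 h2).1 hxD

lemma isPath_append' {u v w : V} (p : G.Walk u v) (q : G.Walk v w) (hp : p.IsPath) (hq : q.IsPath)
    (h : ∀ x ∈ p.support, x ∈ q.support → x = v) : (p.append q).IsPath := by
  rw [Walk.isPath_def, Walk.support_append, List.nodup_append']
  refine ⟨hp.support_nodup, hq.support_nodup.tail, ?_⟩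
  intro x hx hxq
  have h2 := hq.support_nodup
  rw [← Walk.cons_tail_support] at h2
  have := h x hx (List.mem_of_mem_tail hxq)
  subst this
  exact (List.nodup_cons.1 h2).1 hxq

lemma fan {S : Set V} (hS : inseparableOn G S) {v : V} (hv : v ∈ S) (n : ℕ) :
    ∀ (a c : V) (C : G.Walk a a) (R : G.Walk v c), C.IsCycle → (∀ x ∈ C.support, x ∈ S) →
      walkSign G σ C = -1 → v ∉ C.support → c ∈ C.support → R.IsPath →
      (∀ x ∈ R.support, x ∈ S) → R.length ≤ n →
      ∃ (b : V) (w : G.Walk b b), w.IsCycle ∧ v ∈ w.support ∧ walkSign G σ w = 1 := by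
  classical
  induction n using Nat.strong_induction_on with
  | _ n ih =>
  intro a c₀ C₀ R₀ hC₀ hCS₀ hCs₀ hvC₀ hc₀ hR₀ hRS₀ hRn₀
  obtain ⟨c, R, hc, hR, hRR, hRl, hRC⟩ := first_hit {x | x ∈ C₀.support} R₀ hR₀ hc₀
  have hRS : ∀ x ∈ R.support, x ∈ S := fun x hx => hRS₀ x (hRR hx)
  have hRn : R.length ≤ n := hRl.trans hRn₀
  clear hRS₀ hRR hRl hR₀ hRn₀ R₀
  -- rotate the circle to `c`
  obtain ⟨C, hC, hCm, hCs⟩ : ∃ C : G.Walk c c, C.IsCycle ∧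
      (∀ z, z ∈ C.support ↔ z ∈ C₀.support) ∧ walkSign G σ C = -1 :=
    ⟨C₀.rotate c hc, hC₀.rotate hc, fun z => Walk.mem_support_rotate_iff C₀ c hc,
      by rw [sign_rotate, hCs₀]⟩
  have hCS : ∀ x ∈ C.support, x ∈ S := fun x hx => hCS₀ x ((hCm x).1 hx)
  have hvC : v ∉ C.support := fun h => hvC₀ ((hCm v).1 h)
  have hRC : ∀ y ∈ R.support, y ∈ C.support → y = c := fun y hy hy' => hRC y hy ((hCm y).1 hy')
  have hcC : c ∈ C.support := C.start_mem_support
  have hvc : v ≠ c := fun h => hvC (h ▸ hcC)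
  clear hCm hCs₀ hCS₀ hC₀ hvC₀ hc₀ hc
  obtain ⟨c₁, hc₁, hc₁c⟩ : ∃ c₁ ∈ C.support, c₁ ≠ c := by
    obtain ⟨x, y, q, hx, -, -, -, hm, -⟩ := cycle_decomp (σ := σ) C hC hcC
    exact ⟨x, (hm x).2 (Or.inr q.start_mem_support), hx.ne'⟩
  obtain ⟨Q₀, hQ₀, hQS₀⟩ := exists_path (hS.2 c (hCS c hcC)) (x := v) (y := c₁)
    ⟨hv, hvc⟩ ⟨hCS _ hc₁, hc₁c⟩
  obtain ⟨c', Q, hc', hQ, hQQ, -, hQC⟩ := first_hit {x | x ∈ C.support} Q₀ hQ₀ hc₁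
  have hQS : ∀ x ∈ Q.support, x ∈ S \ {c} := fun x hx => hQS₀ x (hQQ hx)
  have hc'c : c' ≠ c := (hQS c' Q.end_mem_support).2
  obtain ⟨q, Q', hq, hQ', hQQ', -, hQ'R⟩ := first_hit {x | x ∈ R.support} Q.reverse hQ.reverse
    R.start_mem_support
  have hQ'Q : ∀ x ∈ Q'.support, x ∈ Q.support := fun x hx => by simpa using hQQ' hx
  have hq : q ∈ R.support := hq
  obtain ⟨R₁, R₂, hR₁, hR₂, hRe⟩ := hR.mem_support_iff_exists_append.1 hq
  have hR₁R : ∀ x ∈ R₁.support, x ∈ R.support := fun x hx => by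
    rw [hRe, Walk.mem_support_append_iff]; exact Or.inl hx
  have hR₂R : ∀ x ∈ R₂.support, x ∈ R.support := fun x hx => by
    rw [hRe, Walk.mem_support_append_iff]; exact Or.inr hx
  have hqc : q ≠ c := (hQS q (hQ'Q q Q'.end_mem_support)).2
  have hqC : q ∉ C.support := fun h => hqc (hRC q hq h)
  have hqc' : q ≠ c' := fun h => hqC (h ▸ hc')
  have hR₂l : 0 < R₂.length := by
    rw [Nat.pos_iff_ne_zero]
    exact fun h => hqc (Walk.eq_of_length_eq_zero h)
  have hQ'l : 0 < Q'.length := by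
    rw [Nat.pos_iff_ne_zero]
    exact fun h => hqc' (Walk.eq_of_length_eq_zero h).symm
  obtain ⟨D, hDe⟩ : ∃ D, D = Q'.append R₂ := ⟨_, rfl⟩
  have hDm : ∀ x, x ∈ D.support ↔ x ∈ Q'.support ∨ x ∈ R₂.support := fun x => by
    rw [hDe, Walk.mem_support_append_iff]
  have hD : D.IsPath := by
    rw [hDe]
    exact isPath_append' Q' R₂ hQ' hR₂ (fun x hx hx' => hQ'R x hx (hR₂R x hx'))
  have hDl : 1 < D.length := by rw [hDe, Walk.length_append]; omega
  have hqD : q ∈ D.support := (hDm q).2 (Or.inl Q'.end_mem_support)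
  have hDS : ∀ x ∈ D.support, x ∈ S := fun x hx => by
    rcases (hDm x).1 hx with h | h
    · exact (hQS x (hQ'Q x h)).1
    · exact hRS x (hR₂R x h)
  have hDC : ∀ x ∈ C.support, x ∈ D.support → x = c ∨ x = c' := fun x hxC hx => by
    rcases (hDm x).1 hx with h | h
    · exact Or.inr (hQC x (hQ'Q x h) hxC)
    · exact Or.inl (hRC x (hR₂R x h) hxC)
  have hvD : v ∈ D.support → v = q := fun h => by
    rcases (hDm v).1 h with h | h
    · exact hQ'R v h R.start_mem_support
    · by_contra hvq
      rw [hRe] at hR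
      exact hR.ne_of_mem_support_of_append hvq R₁.start_mem_support h rfl
  -- the two arcs of the circle
  have hc' : c' ∈ C.support := hc'
  obtain ⟨A, B, hAB, hA, hB⟩ : ∃ (A : G.Walk c c') (B : G.Walk c' c), C = A.append B ∧
      A.IsPath ∧ B.IsPath := by
    refine ⟨C.takeUntil c' hc', C.dropUntil c' hc', (C.take_spec hc').symm,
      hC.isPath_takeUntil hc', ?_⟩
    rw [← C.take_spec hc'] at hC
    exact hC.isPath_of_append_right (Walk.not_nil_of_ne hc'c.symm)
  have hsign : walkSign G σ A * walkSign G σ B = -1 := by rw [← sign_append, ← hAB, hCs]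
  have hAC : ∀ x ∈ A.support, x ∈ C.support := fun x hx => by
    rw [hAB, Walk.mem_support_append_iff]; exact Or.inl hx
  have hBC : ∀ x ∈ B.reverse.support, x ∈ C.support := fun x hx => by
    rw [hAB, Walk.mem_support_append_iff]; exact Or.inr (by simpa using hx)
  have hsB : walkSign G σ B.reverse = walkSign G σ B := sign_reverse B
  -- given an arc, a circle through `q`
  have arc : ∀ E : G.Walk c c', E.IsPath → (∀ x ∈ E.support, x ∈ C.support) →
      (E.append D).IsCycle ∧ (∀ x ∈ (E.append D).support, x ∈ S) ∧
      q ∈ (E.append D).support ∧ (v ∈ (E.append D).support → v = q) := by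
    intro E hE hEC
    refine ⟨theta (q := q) E D hE hD hDl (fun x hx hx' => hDC x (hEC x hx) hx'), ?_, ?_, ?_⟩
    · intro x hx
      rcases Walk.mem_support_append_iff _ _ |>.1 hx with h | h
      · exact hCS x (hEC x h)
      · exact hDS x h
    · exact Walk.mem_support_append_iff _ _ |>.2 (Or.inr hqD)
    · intro hx
      rcases Walk.mem_support_append_iff _ _ |>.1 hx with h | h
      · exact absurd (hEC v h) hvC
      · exact hvD h
  have both : ∀ s : ℤˣ, ∃ E : G.Walk c c', E.IsPath ∧ (∀ x ∈ E.support, x ∈ C.support) ∧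
      walkSign G σ (E.append D) = s := by
    intro s
    by_cases h : walkSign G σ A * walkSign G σ D = s
    · exact ⟨A, hA, hAC, by rw [sign_append, h]⟩
    · refine ⟨B.reverse, hB.reverse, hBC, ?_⟩
      rw [sign_append, hsB]
      rcases Int.units_eq_one_or (walkSign G σ A) with h1 | h1 <;>
      rcases Int.units_eq_one_or (walkSign G σ B) with h2 | h2 <;>
      rcases Int.units_eq_one_or (walkSign G σ D) with h3 | h3 <;>
      rcases Int.units_eq_one_or s with h4 | h4 <;>
      simp [h1, h2, h3, h4] at hsign h ⊢
  by_cases hvq : v = q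
  · obtain ⟨E, hE, hEC, hs⟩ := both 1
    obtain ⟨h1, -, h3, -⟩ := arc E hE hEC
    exact ⟨c, _, h1, hvq ▸ h3, hs⟩
  · obtain ⟨E, hE, hEC, hs⟩ := both (-1)
    obtain ⟨h1, h2, h3, h4⟩ := arc E hE hEC
    have hlt : R₁.length < n := by
      have : R.length = R₁.length + R₂.length := by rw [hRe, Walk.length_append]
      omega
    exact ih R₁.length hlt c q _ R₁ h1 h2 hs (fun h => hvq (h4 h)) h3 hR₁
      (fun x hx => hRS x (hR₁R x hx)) le_rfl

lemma balanced_of_balancing {S : Set V} {v : V}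
    (h : ∀ ⦃a : V⦄ (w : G.Walk a a), w.IsCycle → (∀ x ∈ w.support, x ∈ S) →
      walkSign G σ w = -1 → v ∈ w.support) : balancedOn G σ (S \ {v}) := by
  intro a w hw hS
  rcases Int.units_eq_one_or (walkSign G σ w) with h1 | h1
  · exact h1
  · exact absurd rfl (hS v (h w hw (fun x hx => (hS x hx).1) h1)).2

lemma not_balanced_exists {S : Set V} (h : ¬ balancedOn G σ S) :
    ∃ (a : V) (w : G.Walk a a), w.IsCycle ∧ (∀ x ∈ w.support, x ∈ S) ∧ walkSign G σ w = -1 := by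
  unfold balancedOn at h
  push Not at h
  obtain ⟨a, w, hw, hS, h1⟩ := h
  exact ⟨a, w, hw, hS, (Int.units_eq_one_or _).resolve_left h1⟩

end SignedCircle

open SignedCircle in
theorem vertex_in_positive_circle_iff {V : Type*} [Fintype V]
    (G : SimpleGraph V) (σ : Sym2 V → ℤˣ) (v : V) :
    (∃ (a : V) (w : G.Walk a a), w.IsCycle ∧ v ∈ w.support ∧
        walkSign G σ w = 1) ↔
      ∃ S : Set V, isBlock G S ∧ v ∈ S ∧
        ((balancedOn G σ S ∧ 3 ≤ S.ncard) ∨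
          (¬ balancedOn G σ S ∧
            ¬ ((∀ ⦃a : V⦄ (w : G.Walk a a), w.IsCycle → (∀ x ∈ w.support, x ∈ S) →
                  walkSign G σ w = -1 → v ∈ w.support) ∧
               {u | u ∈ S ∧ G.Adj v u}.ncard = 2))) := by
  classical
  constructor
  · rintro ⟨a, w, hw, hv, hs⟩
    obtain ⟨S, hS, hwS⟩ := exists_block (cycle_insep w hw)
    have hwS : ∀ x ∈ w.support, x ∈ S := fun x hx => hwS hx
    refine ⟨S, hS, hwS v hv, ?_⟩
    by_cases hb : balancedOn G σ S
    · exact Or.inl ⟨hb, cycle_card w hw hwS⟩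
    refine Or.inr ⟨hb, ?_⟩
    rintro ⟨hbal, hdeg⟩
    have hT := balanced_of_balancing hbal
    obtain ⟨b, w', hw', hwS', hs'⟩ := not_balanced_exists hb
    have hv' := hbal w' hw' hwS' hs'
    obtain ⟨x, y, q, hx, hy, hxy, hvq, hm, hsq⟩ := cycle_decomp (σ := σ) w hw hv
    obtain ⟨x', y', q', hx', hy', hxy', hvq', hm', hsq'⟩ := cycle_decomp (σ := σ) w' hw' hv'
    have hqT : ∀ z ∈ q.support, z ∈ S \ {v} := fun z hz =>
      ⟨hwS z ((hm z).2 (Or.inr hz)), fun h => hvq (h ▸ hz)⟩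
    have hqT' : ∀ z ∈ q'.support, z ∈ S \ {v} := fun z hz =>
      ⟨hwS' z ((hm' z).2 (Or.inr hz)), fun h => hvq' (h ▸ hz)⟩
    have hset : ∀ z ∈ S, G.Adj v z → z = x ∨ z = y := by
      intro z hz hvz
      by_contra hne
      push Not at hne
      have : 2 < {u | u ∈ S ∧ G.Adj v u}.ncard := by
        rw [Set.two_lt_ncard]
        exact ⟨x, ⟨(hqT x q.start_mem_support).1, hx⟩, y, ⟨(hqT y q.end_mem_support).1, hy⟩,
          z, ⟨hz, hvz⟩, hxy, hne.1.symm, hne.2.symm⟩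
      omega
    rw [hs] at hsq
    rw [hs'] at hsq'
    rcases hset x' (hqT' x' q'.start_mem_support).1 hx' with rfl | rfl
    · have : y' = y := (hset y' (hqT' y' q'.end_mem_support).1 hy').resolve_left hxy'.symm
      subst this
      rw [sign_eq hT q' q hqT' hqT, ← hsq] at hsq'
      exact absurd hsq' (by decide)
    · have : y' = x := (hset y' (hqT' y' q'.end_mem_support).1 hy').resolve_right hxy'.symm
      subst this
      rw [← sign_reverse q', sign_eq hT q'.reverse q (by simpa using hqT') hqT, mul_right_comm,
        mul_comm (σ _), mul_right_comm, ← hsq] at hsq'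
      exact absurd hsq' (by decide)
  · rintro ⟨S, hS, hv, ⟨hb, hc⟩ | ⟨hb, hn⟩⟩
    · obtain ⟨x, hx, y, hy, hvx, hvy, hxy⟩ := two_nbrs hS.1 hc hv
      obtain ⟨q, -, w, hw, hwS, -⟩ := cycle_of_nbrs (σ := σ) hS.1 hv hx hy hvx hvy hxy
      exact ⟨v, w, hw, w.start_mem_support, hb w hw hwS⟩
    · by_cases hbal : ∀ ⦃a : V⦄ (w : G.Walk a a), w.IsCycle → (∀ x ∈ w.support, x ∈ S) →
                  walkSign G σ w = -1 → v ∈ w.support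
      · have hT := balanced_of_balancing hbal
        have hdeg : {u | u ∈ S ∧ G.Adj v u}.ncard ≠ 2 := fun h => hn ⟨hbal, h⟩
        obtain ⟨b, w', hw', hwS', hs'⟩ := not_balanced_exists hb
        have hc := cycle_card w' hw' hwS'
        have h3 : 2 < {u | u ∈ S ∧ G.Adj v u}.ncard := by
          obtain ⟨x, hx, y, hy, hvx, hvy, hxy⟩ := two_nbrs hS.1 hc hv
          have : 1 < {u | u ∈ S ∧ G.Adj v u}.ncard := by
            rw [Set.one_lt_ncard]
            exact ⟨x, ⟨hx, hvx⟩, y, ⟨hy, hvy⟩, hxy⟩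
          omega
        rw [Set.two_lt_ncard] at h3
        obtain ⟨x, ⟨hx, hvx⟩, y, ⟨hy, hvy⟩, z, ⟨hz, hvz⟩, hxy, hxz, hyz⟩ := h3
        obtain ⟨q₁, hq₁, w₁, hw₁, -, hs₁⟩ := cycle_of_nbrs (σ := σ) hS.1 hv hx hy hvx hvy hxy
        obtain ⟨q₂, hq₂, w₂, hw₂, -, hs₂⟩ := cycle_of_nbrs (σ := σ) hS.1 hv hy hz hvy hvz hyz
        obtain ⟨q₃, hq₃, w₃, hw₃, -, hs₃⟩ := cycle_of_nbrs (σ := σ) hS.1 hv hx hz hvx hvz hxz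
        have key := sign_eq hT (q₁.append q₂) q₃ (by
          intro u hu
          rcases Walk.mem_support_append_iff _ _ |>.1 hu with h | h
          · exact hq₁ u h
          · exact hq₂ u h) hq₃
        rw [sign_append] at key
        by_contra hcon
        push Not at hcon
        have e₁ := (Int.units_eq_one_or _).resolve_left (hcon v w₁ hw₁ w₁.start_mem_support)
        have e₂ := (Int.units_eq_one_or _).resolve_left (hcon v w₂ hw₂ w₂.start_mem_support)
        have e₃ := (Int.units_eq_one_or _).resolve_left (hcon v w₃ hw₃ w₃.start_mem_support)
        rw [hs₁] at e₁
        rw [hs₂] at e₂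
        rw [hs₃, ← key] at e₃
        have e : (σ s(v, x) * walkSign G σ q₁ * σ s(v, y)) *
            (σ s(v, y) * walkSign G σ q₂ * σ s(v, z)) =
            (σ s(v, x) * (walkSign G σ q₁ * walkSign G σ q₂) * σ s(v, z)) *
              (σ s(v, y) * σ s(v, y)) := by
          simp only [mul_assoc, mul_comm, mul_left_comm]
        rw [e₁, e₂, e₃, sq_unit (σ s(v, y))] at e
        exact absurd e (by decide)
      · push Not at hbal
        obtain ⟨a, C, hC, hCS, hCs, hvC⟩ := hbal
        obtain ⟨R, hR, hRS⟩ := exists_path hS.1.1 hv (hCS a C.start_mem_support)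
        exact fan hS.1 hv R.length a a C R hC hCS hCs hvC C.start_mem_support hR hRS le_rfl
end

section
/- If the frustration index of a signed complete graph (K_n, σ) satisfies l(K_n, σ) ≤ (n − 1)/2, then the maximum number of pairwise edge-disjoint negative circles equals the frustration index: p′_−(K_n, σ) = l(K_n, σ). -/
/-- `p′₋(Σ)`: the maximum number of pairwise edge-disjoint negative circles in `Σ`. -/
noncomputable def negCirclePackEdge {V : Type*} (G : SimpleGraph V)
    (σ : Sym2 V → ℤˣ) : ℕ :=
  sSup {k | ∃ c : Fin k → (a : V) × G.Walk a a,
    (∀ i, (c i).2.IsCycle ∧ walkSign G σ (c i).2 = -1) ∧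
    ∀ i j, i ≠ j → ∀ e ∈ (c i).2.edges, e ∉ (c j).2.edges}

/-- Greedy extension of a family of pairs to an edge-disjoint family of triples. -/
lemma exists_triples {V ι : Type*} [Fintype V] [DecidableEq V] [Fintype ι] [DecidableEq ι]
    (s : ι → Finset V) (hs : ∀ i, (s i).card = 2)
    (hp : ∀ i j, i ≠ j → (s i ∩ s j).card ≤ 1)
    (hl : 2 * Fintype.card ι < Fintype.card V) (A : Finset ι) :
    ∃ T : ι → Finset V, (∀ i, s i ⊆ T i) ∧ (∀ i ∈ A, (T i).card = 3) ∧
      (∀ i, i ∉ A → T i = s i) ∧ ∀ i j, i ≠ j → (T i ∩ T j).card ≤ 1 := by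
  induction A using Finset.induction_on with
  | empty => exact ⟨s, fun i => subset_rfl, by simp, by simp, hp⟩
  | insert a A ha ih =>
    obtain ⟨T, h1, h2, h3, h4⟩ := ih
    have hc : ∀ j, (T j).card ≤ 3 := by
      intro j
      by_cases hj : j ∈ A
      · exact (h2 j hj).le
      · rw [h3 j hj, hs]; omega
    let B : Finset V := s a ∪ (Finset.univ.erase a).biUnion
      (fun j => if Disjoint (T j) (s a) then ∅ else T j \ s a)
    have hB : B.card < Fintype.card V := by
      have hb : ((Finset.univ.erase a).biUnion
          (fun j => if Disjoint (T j) (s a) then ∅ else T j \ s a)).card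
          ≤ (Finset.univ.erase a).card * 2 := by
        apply Finset.card_biUnion_le_card_mul
        intro j _
        split_ifs with hd
        · simp
        · have h5 : 0 < (T j ∩ s a).card := by
            rw [Finset.card_pos, ← Finset.not_disjoint_iff_nonempty_inter]; exact hd
          have h6 := Finset.card_sdiff_add_card_inter (T j) (s a)
          have := hc j
          omega
      have h7 : B.card ≤ _ := Finset.card_union_le _ _
      rw [hs a] at h7
      rw [Finset.card_erase_of_mem (Finset.mem_univ a), Finset.card_univ] at hb
      have : 0 < Fintype.card ι := Fintype.card_pos_iff.mpr ⟨a⟩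
      omega
    obtain ⟨w, hw⟩ : ∃ w, w ∉ B := by
      by_contra hcon
      push Not at hcon
      have : B = Finset.univ := Finset.eq_univ_iff_forall.mpr hcon
      rw [this, Finset.card_univ] at hB
      omega
    have hwa : w ∉ s a := fun hh => hw (Finset.mem_union_left _ hh)
    have key : ∀ j, j ≠ a → (insert w (s a) ∩ T j).card ≤ 1 := by
      intro j hj
      by_cases hd : Disjoint (T j) (s a)
      · have : insert w (s a) ∩ T j ⊆ {w} := by
          intro x hx
          rw [Finset.mem_inter, Finset.mem_insert] at hx
          rcases hx with ⟨rfl | hx, hx'⟩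
          · simp
          · exact absurd hx (Finset.disjoint_left.mp hd hx')
        exact (Finset.card_le_card this).trans (by simp)
      · have hwj : w ∉ T j := by
          intro hwj
          apply hw
          apply Finset.mem_union_right
          rw [Finset.mem_biUnion]
          exact ⟨j, by simp [hj], by simp [hd, hwj, hwa]⟩
        rw [Finset.insert_inter_of_notMem hwj]
        have := h4 a j hj.symm
        rwa [h3 a ha] at this
    refine ⟨Function.update T a (insert w (s a)), ?_, ?_, ?_, ?_⟩
    · intro i
      by_cases hi : i = a
      · subst hi; simp
      · simpa [hi] using h1 i
    · intro i hi
      by_cases hia : i = a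
      · subst hia; simp [hwa, hs]
      · simp only [Function.update_of_ne hia]
        exact h2 i (by simpa [hia] using hi)
    · intro i hi
      simp only [Finset.mem_insert, not_or] at hi
      simp only [Function.update_of_ne hi.1]
      exact h3 i hi.2
    · intro i j hij
      by_cases hia : i = a
      · subst hia
        simpa [Function.update_of_ne hij.symm] using key j hij.symm
      · by_cases hja : j = a
        · subst hja
          rw [Finset.inter_comm]
          simpa [Function.update_of_ne hia] using key i hia
        · simpa [Function.update_of_ne hia, Function.update_of_ne hja] using h4 i j hij

lemma unit_sq (a : ℤˣ) : a * a = 1 := Int.units_mul_self a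

/-- Signature given by a potential: walk signs telescope. -/
lemma walkSign_of_potential {V : Type*} (G : SimpleGraph V) (σ : Sym2 V → ℤˣ) (s : V → ℤˣ)
    (hs : ∀ u v, G.Adj u v → σ s(u, v) = s u * s v) {u v : V} (w : G.Walk u v) :
    walkSign G σ w = s u * s v := by
  induction w with
  | nil => simp [walkSign, unit_sq]
  | @cons a b c hab p ih =>
    have : walkSign G σ (SimpleGraph.Walk.cons hab p) = σ s(a, b) * walkSign G σ p := by
      simp [walkSign]
    rw [this, ih, hs a b hab]
    calc s a * s b * (s b * s c) = s a * (s b * s b) * s c := by simp only [mul_assoc]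
      _ = s a * s c := by rw [unit_sq, mul_one]

/-- The triangle walk. -/
def triWalk {V : Type*} (G : SimpleGraph V) {u v w : V} (huv : G.Adj u v) (hvw : G.Adj v w)
    (hwu : G.Adj w u) : G.Walk u u :=
  .cons huv (.cons hvw (.cons hwu .nil))

lemma triWalk_isCycle {V : Type*} (G : SimpleGraph V) {u v w : V} (huv : G.Adj u v)
    (hvw : G.Adj v w) (hwu : G.Adj w u) : (triWalk G huv hvw hwu).IsCycle := by
  have h1 := huv.ne
  have h2 := hvw.ne
  have h3 := hwu.ne
  simp [triWalk, SimpleGraph.Walk.cons_isCycle_iff, SimpleGraph.Walk.cons_isPath_iff,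
    h1, h2, h3, h1.symm, h2.symm, h3.symm]

lemma triWalk_edges {V : Type*} (G : SimpleGraph V) {u v w : V} (huv : G.Adj u v)
    (hvw : G.Adj v w) (hwu : G.Adj w u) :
    (triWalk G huv hvw hwu).edges = [s(u, v), s(v, w), s(w, u)] := by
  simp [triWalk]

/-- A circle of negative sign meets every balancing set. -/
lemma exists_mem_of_neg {V : Type*} (G : SimpleGraph V) (σ : Sym2 V → ℤˣ) (F : Set (Sym2 V))
    (hF : sgBalanced (G.deleteEdges F) σ) {v : V} (w : G.Walk v v) (hw : w.IsCycle)
    (hneg : walkSign G σ w = -1) : ∃ e ∈ F, e ∈ w.edges := by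
  by_contra hcon
  push Not at hcon
  have hh : ∀ e ∈ w.edges, e ∈ (G.deleteEdges F).edgeSet := by
    intro e he
    rw [SimpleGraph.edgeSet_deleteEdges]
    exact ⟨w.edges_subset_edgeSet he, fun h => hcon e h he⟩
  have h1 := hF (w.transfer _ hh) (hw.transfer hh)
  have h2 : walkSign _ σ (w.transfer _ hh) = walkSign G σ w := by
    simp [walkSign]
  rw [h2, hneg] at h1
  exact absurd h1 (by decide)

lemma frustIndex_spec {V : Type*} [Fintype V] (G : SimpleGraph V) (σ : Sym2 V → ℤˣ) :
    ∃ F : Finset (Sym2 V), ↑F ⊆ G.edgeSet ∧ F.card = frustIndex G σ ∧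
      sgBalanced (G.deleteEdges ↑F) σ := by
  classical
  have : frustIndex G σ ∈ {k | ∃ F : Finset (Sym2 V), ↑F ⊆ G.edgeSet ∧ F.card = k ∧
      sgBalanced (G.deleteEdges ↑F) σ} := by
    apply Nat.sInf_mem
    refine ⟨_, G.edgeFinset, by simp, rfl, ?_⟩
    intro v w hw
    exfalso
    cases w with
    | nil => exact hw.ne_nil rfl
    | cons h p => simp at h
  exact this

lemma pack_le {V : Type*} (G : SimpleGraph V) (σ : Sym2 V → ℤˣ) (F : Finset (Sym2 V))
    (hF : sgBalanced (G.deleteEdges ↑F) σ) (k : ℕ) (c : Fin k → (a : V) × G.Walk a a)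
    (hc : ∀ i, (c i).2.IsCycle ∧ walkSign G σ (c i).2 = -1)
    (hd : ∀ i j, i ≠ j → ∀ e ∈ (c i).2.edges, e ∉ (c j).2.edges) : k ≤ F.card := by
  have := fun i => exists_mem_of_neg G σ F hF (c i).2 (hc i).1 (hc i).2
  choose f hf hf' using this
  have hinj : Function.Injective (fun i => (⟨f i, hf i⟩ : F)) := by
    intro i j hij
    by_contra hne
    have hfe : f i = f j := by simpa using hij
    exact hd i j hne (f i) (hf' i) (hfe ▸ hf' j)
  simpa using Fintype.card_le_of_injective _ hinj

/-- The potential for a small minimum balancing set. -/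
lemma exists_potential (n : ℕ) (σ : Sym2 (Fin n) → ℤˣ) (F : Finset (Sym2 (Fin n)))
    (hsub : ↑F ⊆ (⊤ : SimpleGraph (Fin n)).edgeSet)
    (hcard : F.card = frustIndex (⊤ : SimpleGraph (Fin n)) σ)
    (hbal : sgBalanced ((⊤ : SimpleGraph (Fin n)).deleteEdges ↑F) σ)
    (hn : 2 * F.card < n) :
    ∃ s : Fin n → ℤˣ, (∀ u v, u ≠ v → s(u, v) ∉ F → σ s(u, v) = s u * s v) ∧
      ∀ u v, s(u, v) ∈ F → σ s(u, v) = - (s u * s v) := by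
  obtain ⟨r, hr⟩ : ∃ r, r ∉ F.biUnion Sym2.toFinset := by
    by_contra hcon
    push Not at hcon
    have h1 : F.biUnion Sym2.toFinset = Finset.univ := Finset.eq_univ_iff_forall.mpr hcon
    have h2 : (F.biUnion Sym2.toFinset).card ≤ F.card * 2 := by
      apply Finset.card_biUnion_le_card_mul
      intro e _
      rw [Sym2.card_toFinset]; split_ifs <;> omega
    rw [h1, Finset.card_univ, Fintype.card_fin] at h2
    omega
  have hrF : ∀ v, s(r, v) ∉ F := by
    intro v hv
    exact hr (Finset.mem_biUnion.mpr ⟨_, hv, by simp⟩)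
  let s : Fin n → ℤˣ := fun v => if v = r then 1 else σ s(r, v)
  have hpos : ∀ u v, u ≠ v → s(u, v) ∉ F → σ s(u, v) = s u * s v := by
    intro u v huv hF
    by_cases hu : u = r
    · subst hu
      simp [s, huv.symm]
    by_cases hv : v = r
    · subst hv
      simp [s, huv, Sym2.eq_swap]
    simp only [s, hu, hv, if_false]
    have a1 : ((⊤ : SimpleGraph (Fin n)).deleteEdges ↑F).Adj r u := by
      simp [hrF, Ne.symm hu]
    have a2 : ((⊤ : SimpleGraph (Fin n)).deleteEdges ↑F).Adj u v := by
      simp [hF, huv]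
    have a3 : ((⊤ : SimpleGraph (Fin n)).deleteEdges ↑F).Adj v r := by
      rw [SimpleGraph.adj_comm]
      simp [hrF, Ne.symm hv]
    have hc := hbal _ (triWalk_isCycle _ a1 a2 a3)
    rw [walkSign, triWalk_edges] at hc
    simp only [List.map_cons, List.map_nil, List.prod_cons, List.prod_nil, mul_one] at hc
    rw [show s(v, r) = s(r, v) from Sym2.eq_swap] at hc
    rcases Int.units_eq_one_or (σ s(r, u)) with h1 | h1 <;>
    rcases Int.units_eq_one_or (σ s(r, v)) with h2 | h2 <;>
    rcases Int.units_eq_one_or (σ s(u, v)) with h3 | h3 <;>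
    simp_all
  refine ⟨s, hpos, ?_⟩
  intro a b hab
  by_contra hcon
  have heq : σ s(a, b) = s a * s b := by
    rcases Int.units_eq_one_or (σ s(a, b)) with h1 | h1 <;>
    rcases Int.units_eq_one_or (s a * s b) with h2 | h2 <;>
    simp_all
  have hle : frustIndex (⊤ : SimpleGraph (Fin n)) σ ≤ (F.erase s(a, b)).card := by
    apply Nat.sInf_le
    refine ⟨F.erase s(a, b), ?_, rfl, ?_⟩
    · exact fun e he => hsub (Finset.mem_of_mem_erase he)
    · intro v w _
      rw [walkSign_of_potential _ σ s _ w, unit_sq]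
      intro x y hxy
      have hne := hxy.ne
      rw [SimpleGraph.deleteEdges_adj] at hxy
      by_cases hxF : s(x, y) ∈ F
      · have : s(x, y) = s(a, b) := by
          by_contra hh
          exact hxy.2 (Finset.mem_coe.mpr (Finset.mem_erase.mpr ⟨hh, hxF⟩))
        rw [this, heq]
        rcases Sym2.eq_iff.mp this with ⟨rfl, rfl⟩ | ⟨rfl, rfl⟩
        · rfl
        · exact mul_comm _ _
      · exact hpos x y hne hxF
  rw [Finset.card_erase_of_mem hab] at hle
  have := Finset.card_pos.mpr ⟨_, hab⟩
  omega

/-- Two vertices of an edge inside two sets. -/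
lemma two_le_inter {V : Type*} [DecidableEq V] {S T : Finset V} {x y : V} (hxy : x ≠ y)
    (h1 : x ∈ S) (h2 : y ∈ S) (h3 : x ∈ T) (h4 : y ∈ T) : 1 < (S ∩ T).card :=
  Finset.one_lt_card.mpr ⟨x, by simp [h1, h3], y, by simp [h2, h4], hxy⟩

/-- If the frustration index of a signed complete graph `(K_n, σ)` is at most
`(n-1)/2`, then the maximum number of pairwise edge-disjoint negative circles equals
the frustration index. -/
theorem negCirclePack_eq_frustIndex_of_small (n : ℕ) (σ : Sym2 (Fin n) → ℤˣ)
    (h : 2 * frustIndex (⊤ : SimpleGraph (Fin n)) σ ≤ n - 1) :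
    negCirclePackEdge (⊤ : SimpleGraph (Fin n)) σ =
      frustIndex (⊤ : SimpleGraph (Fin n)) σ := by
  obtain ⟨F, hsub, hcard, hbal⟩ := frustIndex_spec (⊤ : SimpleGraph (Fin n)) σ
  apply IsGreatest.csSup_eq
  refine ⟨?_, ?_⟩
  swap
  · rintro k ⟨c, hc, hd⟩
    rw [← hcard]
    exact pack_le _ σ F hbal k c hc hd
  by_cases h0 : frustIndex (⊤ : SimpleGraph (Fin n)) σ = 0
  · rw [h0]
    exact ⟨fun i => i.elim0, fun i => i.elim0, fun i => i.elim0⟩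
  have hn : 2 * F.card < n := by omega
  obtain ⟨s, hs1, hs2⟩ := exists_potential n σ F hsub hcard hbal hn
  have hdiag : ∀ e ∈ F, ¬ e.IsDiag := by
    intro e he
    exact SimpleGraph.not_isDiag_of_mem_edgeSet _ (hsub he)
  obtain ⟨T, hT1, hT2, -, hT4⟩ := exists_triples (fun e : F => e.1.toFinset)
    (fun e => Sym2.card_toFinset_of_not_isDiag _ (hdiag _ e.2))
    (by
      intro e f hef
      by_contra hcon
      push Not at hcon
      obtain ⟨x, hx, y, hy, hxy⟩ := Finset.one_lt_card.mp hcon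
      simp only [Finset.mem_inter, Sym2.mem_toFinset] at hx hy
      apply hef
      apply Subtype.ext
      rw [(Sym2.mem_and_mem_iff hxy).mp ⟨hx.1, hy.1⟩, (Sym2.mem_and_mem_iff hxy).mp ⟨hx.2, hy.2⟩])
    (by simpa using hn) Finset.univ
  have hmain : ∀ e : F, ∃ c : (a : Fin n) × (⊤ : SimpleGraph (Fin n)).Walk a a,
      (c.2.IsCycle ∧ walkSign _ σ c.2 = -1) ∧
      ∀ e' ∈ c.2.edges, ∃ x y, x ≠ y ∧ e' = s(x, y) ∧ x ∈ T e ∧ y ∈ T e := by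
    rintro ⟨e, he⟩
    induction e using Sym2.ind with
    | _ u v =>
    have huv : u ≠ v := by simpa using hdiag _ he
    have hsubT := hT1 ⟨_, he⟩
    have huT : u ∈ T ⟨_, he⟩ := hsubT (by simp)
    have hvT : v ∈ T ⟨_, he⟩ := hsubT (by simp)
    obtain ⟨w, hwT, hw⟩ : ∃ w ∈ T ⟨_, he⟩, w ∉ (s(u, v)).toFinset := by
      apply Finset.exists_mem_notMem_of_card_lt_card
      rw [hT2 _ (Finset.mem_univ _), Sym2.card_toFinset_of_not_isDiag _ (hdiag _ he)]
      omega
    simp only [Sym2.mem_toFinset, Sym2.mem_iff, not_or] at hw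
    have hnF : ∀ x, x ∈ T ⟨_, he⟩ → x ≠ w → s(w, x) ∉ F := by
      intro x hx hxw hF
      have hne : (⟨_, he⟩ : F) ≠ ⟨_, hF⟩ := by
        intro heq
        have h1 : s(u, v) = s(w, x) := congrArg Subtype.val heq
        have h2 : w ∈ s(u, v) := by rw [h1]; simp
        simp [hw.1, hw.2] at h2
      have h3 := hT4 _ _ hne
      have h4 := two_le_inter hxw hx hwT (hT1 ⟨_, hF⟩ (by simp)) (hT1 ⟨_, hF⟩ (by simp))
      omega
    have hwu := hnF u huT (Ne.symm hw.1)
    have hwv := hnF v hvT (Ne.symm hw.2)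
    refine ⟨⟨u, triWalk ⊤ (v := v) (w := w) huv (Ne.symm hw.2) hw.1⟩,
      ⟨triWalk_isCycle _ _ _ _, ?_⟩, ?_⟩
    · rw [walkSign, triWalk_edges]
      simp only [List.map_cons, List.map_nil, List.prod_cons, List.prod_nil, mul_one]
      rw [show s(v, w) = s(w, v) from Sym2.eq_swap, hs2 u v he, hs1 w v hw.2 hwv,
        hs1 w u hw.1 hwu]
      rcases Int.units_eq_one_or (s u) with h1 | h1 <;>
      rcases Int.units_eq_one_or (s v) with h2 | h2 <;>
      rcases Int.units_eq_one_or (s w) with h3 | h3 <;>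
      simp [h1, h2, h3]
    · intro e' he'
      rw [triWalk_edges] at he'
      simp only [List.mem_cons, List.not_mem_nil, or_false] at he'
      rcases he' with rfl | rfl | rfl
      · exact ⟨u, v, huv, rfl, huT, hvT⟩
      · exact ⟨v, w, Ne.symm hw.2, rfl, hvT, hwT⟩
      · exact ⟨w, u, hw.1, rfl, hwT, huT⟩
  choose c hc hce using hmain
  let φ := F.equivFinOfCardEq hcard
  refine ⟨fun i => c (φ.symm i), fun i => hc _, ?_⟩
  intro i j hij e he1 he2
  have hne : φ.symm i ≠ φ.symm j := fun hh => hij (φ.symm.injective hh)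
  obtain ⟨x, y, hxy, rfl, hx, hy⟩ := hce _ _ he1
  obtain ⟨x', y', _, heq, hx', hy'⟩ := hce _ _ he2
  have h3 := hT4 _ _ hne
  have hmem : x ∈ T (φ.symm j) ∧ y ∈ T (φ.symm j) := by
    rcases Sym2.eq_iff.mp heq with ⟨rfl, rfl⟩ | ⟨rfl, rfl⟩
    · exact ⟨hx', hy'⟩
    · exact ⟨hy', hx'⟩
  have := two_le_inter hxy hx hy hmem.1 hmem.2
  omega
end

section
/- If a signed complete graph (K_n, σ) has fewer than n/2 negative edges, then its frustration index equals its number of negative edges: |E^−(K_n, σ)| < n/2 implies l(K_n, σ) = |E^−(K_n, σ)|. -/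
/-- A finite set of fewer than `n/2` edges misses some vertex. -/
lemma exists_untouched (n : ℕ) (F : Finset (Sym2 (Fin n))) (h : 2 * F.card < n) :
    ∃ r : Fin n, ∀ e ∈ F, r ∉ e := by
  classical
  by_contra hc
  push Not at hc
  have h1 : (Finset.univ : Finset (Fin n)) ⊆ F.biUnion Sym2.toFinset := by
    intro r _
    obtain ⟨e, he, hr⟩ := hc r
    exact Finset.mem_biUnion.2 ⟨e, he, Sym2.mem_toFinset.2 hr⟩
  have h2 := Finset.card_le_card h1
  have h3 : (F.biUnion Sym2.toFinset).card ≤ F.card * 2 := by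
    apply Finset.card_biUnion_le_card_mul
    intro e _
    rw [Sym2.card_toFinset]
    split_ifs <;> omega
  rw [Finset.card_univ, Fintype.card_fin] at h2
  omega

/-- The sign of a pair induced by a vertex switching function. -/
def pairSign {n : ℕ} (s : Fin n → ℤˣ) (e : Sym2 (Fin n)) : ℤˣ :=
  Sym2.lift ⟨fun a b => s a * s b, fun a b => mul_comm (s a) (s b)⟩ e

/-- A nontrivial cut of `K_n` has at least `n - 1` edges. -/
lemma cut_card (n : ℕ) (s : Fin n → ℤˣ) (r x : Fin n) (hr : s r = 1) (hx : s x = -1) :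
    n ≤ ((⊤ : SimpleGraph (Fin n)).edgeFinset.filter fun e => pairSign s e = -1).card + 1 := by
  classical
  have key : ((Finset.univ : Finset (Fin n)).erase r).card ≤
      ((⊤ : SimpleGraph (Fin n)).edgeFinset.filter fun e => pairSign s e = -1).card := by
    apply Finset.card_le_card_of_injOn (fun v => if s v = -1 then s(r, v) else s(x, v))
    · intro v hv
      have hvr : v ≠ r := by simpa using hv
      by_cases h : s v = -1
      · simp [h, pairSign, hr, hvr.symm]
      · have h1 : s v = 1 := (Int.units_eq_one_or (s v)).resolve_right h
        have hxv : x ≠ v := by rintro rfl; exact h hx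
        simp [h1, pairSign, hx, hxv]
    · intro v hv w hw hvw
      have hvr : v ≠ r := by simpa using hv
      have hwr : w ≠ r := by simpa using hw
      have hne : s r ≠ -1 := by rw [hr]; decide
      dsimp only at hvw
      split_ifs at hvw with h1 h2 h2 <;> simp only [Sym2.eq_iff] at hvw <;> grind
  rw [Finset.card_erase_of_mem (Finset.mem_univ r), Finset.card_univ, Fintype.card_fin] at key
  omega

/-- In a balanced signed graph every triangle is positive. -/
lemma triangle_sign {V : Type*} (G : SimpleGraph V) (σ : Sym2 V → ℤˣ) (hb : sgBalanced G σ)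
    {a b c : V} (hab : G.Adj a b) (hbc : G.Adj b c) (hca : G.Adj c a) :
    σ s(a, b) * σ s(b, c) * σ s(c, a) = 1 := by
  have h := hb (.cons hab (.cons hbc (.cons hca .nil))) (by
    have h1 := hab.ne
    have h2 := hbc.ne
    have h3 := hca.ne
    rw [SimpleGraph.Walk.cons_isCycle_iff]
    simp [SimpleGraph.Walk.isPath_def]
    grind)
  simpa [walkSign, mul_assoc] using h

/-- If a signed complete graph `(K_n, σ)` has fewer than `n/2` negative edges, then its
frustration index equals its number of negative edges. -/
theorem frustIndex_eq_negEdges_of_few (n : ℕ) (σ : Sym2 (Fin n) → ℤˣ)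
    (h : 2 * ((⊤ : SimpleGraph (Fin n)).edgeFinset.filter fun e => σ e = -1).card < n) :
    frustIndex (⊤ : SimpleGraph (Fin n)) σ =
      ((⊤ : SimpleGraph (Fin n)).edgeFinset.filter fun e => σ e = -1).card := by
  classical
  set N := (⊤ : SimpleGraph (Fin n)).edgeFinset.filter fun e => σ e = -1 with hN
  have hmem : ∃ F : Finset (Sym2 (Fin n)), ↑F ⊆ (⊤ : SimpleGraph (Fin n)).edgeSet ∧
      F.card = N.card ∧ sgBalanced ((⊤ : SimpleGraph (Fin n)).deleteEdges ↑F) σ := by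
    refine ⟨N, ?_, rfl, ?_⟩
    · intro e he
      exact SimpleGraph.mem_edgeFinset.1 (Finset.mem_filter.1 (Finset.mem_coe.1 he)).1
    · intro v w _
      unfold walkSign
      apply List.prod_eq_one
      intro z hz
      obtain ⟨e, he, rfl⟩ := List.mem_map.1 hz
      have he' := w.edges_subset_edgeSet he
      rw [SimpleGraph.edgeSet_deleteEdges] at he'
      refine (Int.units_eq_one_or (σ e)).resolve_right fun hneg => he'.2 ?_
      exact Finset.mem_coe.2 (Finset.mem_filter.2 ⟨SimpleGraph.mem_edgeFinset.2 he'.1, hneg⟩)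
  apply le_antisymm
  · exact Nat.sInf_le hmem
  · refine le_csInf ⟨_, hmem⟩ ?_
    rintro k ⟨F, hF, rfl, hb⟩
    by_contra hlt
    obtain ⟨r, hr⟩ := exists_untouched n F (by omega)
    let s : Fin n → ℤˣ := fun v => if v = r then 1 else σ s(r, v)
    have hsr : s r = 1 := by simp [s]
    set C := (⊤ : SimpleGraph (Fin n)).edgeFinset.filter fun e => pairSign s e = -1 with hC
    -- outside `F`, the signature is the one induced by `s`
    have hpot : ∀ e ∈ (⊤ : SimpleGraph (Fin n)).edgeFinset, e ∉ F → σ e = pairSign s e := by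
      intro e
      induction e using Sym2.ind with
      | _ a b =>
        intro hab hnF
        have hab : a ≠ b := by simpa using hab
        by_cases ha : a = r
        · subst ha
          simp [pairSign, s, hab.symm]
        by_cases hbr : b = r
        · subst hbr
          simp [pairSign, s, hab, Sym2.eq_swap]
        have adj : ∀ {u v : Fin n}, u ≠ v → s(u, v) ∉ F →
            ((⊤ : SimpleGraph (Fin n)).deleteEdges ↑F).Adj u v := by
          intro u v h1 h2
          simp [SimpleGraph.deleteEdges_adj, h1, h2]
        have ht := triangle_sign _ σ hb (a := r) (b := a) (c := b)
          (adj (Ne.symm ha) fun h' => hr _ h' (by simp)) (adj hab hnF)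
          (adj hbr fun h' => hr _ h' (by simp))
        have e1 : s(b, r) = s(r, b) := Sym2.eq_swap
        rw [e1] at ht
        simp only [pairSign, s, Sym2.lift_mk, ha, hbr, if_false]
        rcases Int.units_eq_one_or (σ s(r, a)) with h1 | h1 <;>
        rcases Int.units_eq_one_or (σ s(r, b)) with h2 | h2 <;>
        rcases Int.units_eq_one_or (σ s(a, b)) with h3 | h3 <;>
        rw [h1, h2, h3] at ht ⊢ <;> revert ht <;> decide
    have hNF : N \ C ⊆ F := by
      intro e he
      by_contra hn
      simp only [hN, hC, Finset.mem_sdiff, Finset.mem_filter] at he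
      have := hpot e he.1.1 hn
      exact he.2 ⟨he.1.1, this ▸ he.1.2⟩
    have hCF : C \ N ⊆ F := by
      intro e he
      by_contra hn
      simp only [hN, hC, Finset.mem_sdiff, Finset.mem_filter] at he
      have := hpot e he.1.1 hn
      exact he.2 ⟨he.1.1, this.trans he.1.2⟩
    by_cases hx : ∃ x, s x = -1
    · obtain ⟨x, hx⟩ := hx
      have hcut := cut_card n s r x hsr hx
      rw [← hC] at hcut
      have h1 := Finset.card_le_card hCF
      have h2 := Finset.le_card_sdiff N C
      omega
    · push Not at hx
      have h1 : ∀ x, s x = 1 := fun x => (Int.units_eq_one_or (s x)).resolve_right (hx x)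
      have hCe : C = ∅ := by
        rw [hC, Finset.filter_eq_empty_iff]
        intro e _
        induction e using Sym2.ind with
        | _ a b => simp [pairSign, h1]
      rw [hCe, Finset.sdiff_empty] at hNF
      exact hlt (Finset.card_le_card hNF)
end

section
/- For odd k with 3 ≤ k ≤ n, the maximum over all signatures σ of the number of negative circles of length k in (K_n, σ) equals the total number of circles of length k in K_n, and is attained by the all-negative signature: max_σ c_k^−(K_n, σ) = c_k^−(−K_n) = c_k(K_n). Moreover, if (K_n, σ) is not antibalanced, then c_k^−(K_n, σ) < c_k(K_n). -/
/-- `c_k⁻(Σ)`: the number of negative circles of length `k` in a signed graph, a circle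
being identified with its edge set. -/
noncomputable def negCircCount {V : Type*} [DecidableEq V] (G : SimpleGraph V)
    (σ : Sym2 V → ℤˣ) (k : ℕ) : ℕ :=
  {C : Finset (Sym2 V) | ∃ (a : V) (w : G.Walk a a), w.IsCycle ∧ w.length = k ∧
    walkSign G σ w = -1 ∧ w.edges.toFinset = C}.ncard

/-- `c_k(Γ)`: the total number of circles of length `k` in a graph, a circle being
identified with its edge set. -/
noncomputable def circCount {V : Type*} [DecidableEq V] (G : SimpleGraph V) (k : ℕ) :
    ℕ :=
  {C : Finset (Sym2 V) | ∃ (a : V) (w : G.Walk a a), w.IsCycle ∧ w.length = k ∧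
    w.edges.toFinset = C}.ncard

open SimpleGraph in
theorem aux_path {n : ℕ} (m : ℕ) : ∀ (F : Finset (Fin n)) (d a : Fin n), d ≠ a → d ∉ F → a ∉ F →
    F.card + m + 2 ≤ n →
    ∃ p : (⊤ : SimpleGraph (Fin n)).Walk d a, p.IsPath ∧ p.length = m + 1 ∧
      ∀ x ∈ F, x ∉ p.support := by
  induction m with
  | zero =>
    intro F d a hda hd ha _
    have hadj : (⊤ : SimpleGraph (Fin n)).Adj d a := hda
    refine ⟨Walk.cons hadj Walk.nil, ?_, by simp, ?_⟩
    · simp [Walk.cons_isPath_iff, hda]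
    · intro x hx
      simp only [Walk.support_cons, Walk.support_nil, List.mem_cons, List.not_mem_nil, or_false]
      rintro (rfl | rfl)
      · exact hd hx
      · exact ha hx
  | succ m ih =>
    intro F d a hda hd ha hcard
    obtain ⟨x, hx⟩ : ∃ x, x ∉ insert a (insert d F) := by
      by_contra hcon
      push Not at hcon
      have h1 : (Finset.univ : Finset (Fin n)).card ≤ (insert a (insert d F)).card :=
        Finset.card_le_card (fun x _ => hcon x)
      have h2 := Finset.card_insert_le a (insert d F)
      have h3 := Finset.card_insert_le d F
      simp only [Finset.card_univ, Fintype.card_fin] at h1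
      omega
    simp only [Finset.mem_insert, not_or] at hx
    obtain ⟨hxa, hxd, hxF⟩ := hx
    obtain ⟨p, hp, hl, hF⟩ := ih (insert d F) x a hxa (by simp [hxd, hxF])
      (by simp [ha, Ne.symm hda]) (by rw [Finset.card_insert_of_notMem hd]; omega)
    have hadj : (⊤ : SimpleGraph (Fin n)).Adj d x := Ne.symm hxd
    refine ⟨Walk.cons hadj p, ?_, by simp [hl], ?_⟩
    · rw [Walk.cons_isPath_iff]
      exact ⟨hp, hF d (by simp)⟩
    · intro y hy
      rw [Walk.support_cons, List.mem_cons, not_or]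
      exact ⟨fun h => hd (h ▸ hy), hF y (by simp [hy])⟩

open SimpleGraph in
theorem aux_walk {V : Type*} (f : Sym2 V → ℤˣ) (s : ℤˣ) (g : V → ℤˣ)
    (h : ∀ a b, a ≠ b → f s(a, b) = s * g a * g b) {u v : V}
    (w : (⊤ : SimpleGraph V).Walk u v) :
    walkSign ⊤ f w = s ^ w.length * g u * g v := by
  induction w with
  | nil => simp [walkSign, mul_assoc, Int.units_mul_self]
  | cons hadj p ih =>
    rename_i a b c
    unfold walkSign at ih ⊢
    rw [Walk.edges_cons, List.map_cons, List.prod_cons, ih, h _ _ hadj.ne, Walk.length_cons,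
      pow_succ]
    have := Int.units_mul_self (g b)
    calc s * g a * g b * (s ^ p.length * g b * g c)
        = (s ^ p.length * s * g a * g c) * (g b * g b) := by
          simp only [mul_comm, mul_left_comm, mul_assoc]
      _ = _ := by rw [this, mul_one]

theorem aux_sign_eq {V : Type*} [DecidableEq V] (G : SimpleGraph V) (f : Sym2 V → ℤˣ) {u : V}
    (w : G.Walk u u) (h : w.IsCycle) : walkSign G f w = ∏ e ∈ w.edges.toFinset, f e := by
  unfold walkSign
  rw [List.prod_toFinset _ h.edges_nodup]

open SimpleGraph in
theorem aux_cycle {n : ℕ} {a b c d : Fin n} (hab : a ≠ b) (hac : a ≠ c)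
    (hbc : b ≠ c) (hcd : c ≠ d) (p : (⊤ : SimpleGraph (Fin n)).Walk d a)
    (hp : p.IsPath) (hb : b ∉ p.support) (hc : c ∉ p.support) :
    ∃ w : (⊤ : SimpleGraph (Fin n)).Walk a a, w.IsCycle ∧ w.length = p.length + 3 ∧
      ∀ f, walkSign ⊤ f w = f s(a, b) * (f s(b, c) * (f s(c, d) * walkSign ⊤ f p)) := by
  have h1 : (⊤ : SimpleGraph (Fin n)).Adj a b := hab
  have h2 : (⊤ : SimpleGraph (Fin n)).Adj b c := hbc
  have h3 : (⊤ : SimpleGraph (Fin n)).Adj c d := hcd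
  have hbd : b ≠ d := fun h => hb (h ▸ p.start_mem_support)
  refine ⟨Walk.cons h1 (Walk.cons h2 (Walk.cons h3 p)), ?_, by simp, ?_⟩
  · rw [Walk.cons_isCycle_iff, Walk.cons_isPath_iff, Walk.cons_isPath_iff]
    refine ⟨⟨⟨hp, hc⟩, ?_⟩, ?_⟩
    · simp [hbc, hb]
    · have hpe : s(a, b) ∉ p.edges := fun h => hb (p.snd_mem_support_of_mem_edges h)
      simp [hpe, hab, hac, hbc, hbd]
  · intro f
    simp [walkSign]

theorem aux_s {n k : ℕ} (hodd : Odd k) (h3 : 3 ≤ k) (hkn : k ≤ n) (f : Sym2 (Fin n) → ℤˣ)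
    (h : ∀ (a : Fin n) (w : (⊤ : SimpleGraph (Fin n)).Walk a a), w.IsCycle → w.length = k →
      walkSign ⊤ f w = -1) (z : Fin n) :
    ∃ s : ℤˣ, ∀ a b, a ≠ z → b ≠ z → a ≠ b → f s(z, a) * f s(z, b) * f s(a, b) = s := by
  by_cases hk : k = 3
  · subst hk
    refine ⟨-1, fun a b ha hb hab => ?_⟩
    obtain ⟨w, hw, hl, hs⟩ := aux_cycle (a := z) (b := a) (c := b) (d := z) ha.symm hb.symm hab hb
      SimpleGraph.Walk.nil (by simp) (by simpa using ha) (by simpa using hb)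
    have := h z w hw (by simpa using hl)
    rw [hs] at this
    simp only [walkSign, SimpleGraph.Walk.edges_nil, List.map_nil, List.prod_nil, mul_one] at this
    rw [← this, Sym2.eq_swap (a := b) (b := z)]
    simp only [mul_comm, mul_left_comm, mul_assoc]
  · have hk5 : 5 ≤ k := by
      obtain ⟨r, rfl⟩ := hodd
      omega
    have hsq := fun e => Int.units_mul_self (f e)
    have quad : ∀ a b c d : Fin n, a ≠ b → a ≠ c → a ≠ d → b ≠ c → b ≠ d → c ≠ d →
        f s(a, b) * f s(c, d) = f s(a, c) * f s(b, d) := by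
      intro a b c d hab hac had hbc hbd hcd
      obtain ⟨p, hp, hl, hF⟩ := aux_path (k - 4) {b, c} d a had.symm
        (by simp [hbd.symm, hcd.symm]) (by simp [hab, hac])
        (by rw [Finset.card_pair hbc]; omega)
      have hb := hF b (by simp)
      have hc := hF c (by simp)
      obtain ⟨w, hw, hwl, hs⟩ := aux_cycle hab hac hbc hcd p hp hb hc
      obtain ⟨w', hw', hwl', hs'⟩ := aux_cycle hac hab hbc.symm hbd p hp hc hb
      have e1 := h a w hw (by omega)
      have e2 := h a w' hw' (by omega)
      rw [hs] at e1
      rw [hs', Sym2.eq_swap (a := c) (b := b)] at e2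
      rw [← e2] at e1
      generalize walkSign ⊤ f p = P at e1
      have : (f s(b, c) * P) * (f s(a, b) * f s(c, d)) =
          (f s(b, c) * P) * (f s(a, c) * f s(b, d)) := by
        calc _ = f s(a, b) * (f s(b, c) * (f s(c, d) * P)) := by
              simp only [mul_comm, mul_left_comm, mul_assoc]
          _ = _ := e1
          _ = _ := by simp only [mul_comm, mul_left_comm, mul_assoc]
      exact mul_left_cancel this
    -- replacing one vertex
    have rep : ∀ a x b : Fin n, a ≠ z → b ≠ z → x ≠ z → a ≠ b → x ≠ b →
        f s(z, a) * f s(z, b) * f s(a, b) = f s(z, x) * f s(z, b) * f s(x, b) := by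
      intro a x b ha hb hx hab hxb
      by_cases hax : a = x
      · rw [hax]
      have q := quad z a x b ha.symm hx.symm hb.symm hax hab hxb
      -- f za * f xb = f zx * f ab
      have h1 := hsq s(x, b)
      have h2 := hsq s(a, b)
      calc f s(z, a) * f s(z, b) * f s(a, b)
          = (f s(z, a) * f s(x, b)) * (f s(z, b) * f s(a, b) * f s(x, b)) := by
            rw [← mul_one (f s(z, a) * f s(z, b) * f s(a, b)), ← h1]
            simp only [mul_comm, mul_left_comm, mul_assoc]
        _ = (f s(z, x) * f s(a, b)) * (f s(z, b) * f s(a, b) * f s(x, b)) := by rw [q]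
        _ = (f s(z, x) * f s(z, b) * f s(x, b)) * (f s(a, b) * f s(a, b)) := by
            simp only [mul_comm, mul_left_comm, mul_assoc]
        _ = _ := by rw [h2, mul_one]
    have swap : ∀ a b : Fin n, f s(z, a) * f s(z, b) * f s(a, b) =
        f s(z, b) * f s(z, a) * f s(b, a) := by
      intro a b
      rw [Sym2.eq_swap (a := a) (b := b), mul_comm (f s(z, a))]
    obtain ⟨x, hx⟩ : ∃ x, x ∉ ({z} : Finset (Fin n)) := by
      by_contra hcon
      push Not at hcon
      have h1 : (Finset.univ : Finset (Fin n)).card ≤ ({z} : Finset (Fin n)).card :=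
        Finset.card_le_card (fun x _ => hcon x)
      simp at h1
      omega
    obtain ⟨y, hy⟩ : ∃ y, y ∉ ({z, x} : Finset (Fin n)) := by
      by_contra hcon
      push Not at hcon
      have h1 : (Finset.univ : Finset (Fin n)).card ≤ ({z, x} : Finset (Fin n)).card :=
        Finset.card_le_card (fun x _ => hcon x)
      have := Finset.card_le_two (a := z) (b := x)
      simp only [Finset.card_univ, Fintype.card_fin] at h1
      omega
    simp only [Finset.mem_singleton, Finset.mem_insert, not_or] at hx hy
    obtain ⟨hyz, hyx⟩ := hy
    refine ⟨f s(z, x) * f s(z, y) * f s(x, y), fun a b ha hb hab => ?_⟩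
    by_cases hbx : b = x
    · subst hbx
      rw [rep a y b ha hb hyz hab hyx, swap]
    · rw [rep a x b ha hb hx hab (Ne.symm hbx), swap, rep b y x hb hx hyz hbx hyx, swap]

theorem aux_main {n k : ℕ} (hodd : Odd k) (h3 : 3 ≤ k) (hkn : k ≤ n) (f : Sym2 (Fin n) → ℤˣ)
    (h : ∀ (a : Fin n) (w : (⊤ : SimpleGraph (Fin n)).Walk a a), w.IsCycle → w.length = k →
      walkSign ⊤ f w = -1) : sgAntibalanced (⊤ : SimpleGraph (Fin n)) f := by
  have hn : 3 ≤ n := h3.trans hkn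
  let z : Fin n := ⟨0, by omega⟩
  obtain ⟨s, hs⟩ := aux_s hodd h3 hkn f h z
  let g : Fin n → ℤˣ := fun v => if v = z then s else f s(z, v)
  have hg : ∀ a b, a ≠ b → f s(a, b) = s * g a * g b := by
    intro a b hab
    by_cases ha : a = z
    · have hb : b ≠ z := fun hb => hab (ha.trans hb.symm)
      simp only [g, if_true, if_neg hb, Int.units_mul_self, one_mul, ha]
    · by_cases hb : b = z
      · simp only [g, if_neg ha, if_pos hb]
        rw [hb, mul_right_comm, Int.units_mul_self, one_mul, Sym2.eq_swap]
      · simp only [g, if_neg ha, if_neg hb]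
        rw [← hs a b ha hb hab]
        have h1 := Int.units_mul_self (f s(z, a))
        have h2 := Int.units_mul_self (f s(z, b))
        calc f s(a, b) = f s(a, b) * (f s(z, a) * f s(z, a)) * (f s(z, b) * f s(z, b)) := by
              rw [h1, h2, mul_one, mul_one]
          _ = _ := by simp only [mul_comm, mul_left_comm, mul_assoc]
  -- there is a cycle of length `k`
  obtain ⟨a, w, hw, hl⟩ : ∃ (a : Fin n) (w : (⊤ : SimpleGraph (Fin n)).Walk a a),
      w.IsCycle ∧ w.length = k := by
    let x : Fin n := ⟨1, by omega⟩
    let y : Fin n := ⟨2, by omega⟩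
    have hzx : z ≠ x := by simp [z, x]
    have hzy : z ≠ y := by simp [z, y]
    have hxy : x ≠ y := by simp [x, y]
    by_cases hk : k = 3
    · obtain ⟨w, hw, hl, -⟩ := aux_cycle (a := z) (b := x) (c := y) (d := z) hzx hzy hxy hzy.symm
        SimpleGraph.Walk.nil (by simp) (by simpa using hzx.symm) (by simpa using hzy.symm)
      exact ⟨z, w, hw, by simpa [hk] using hl⟩
    · let t : Fin n := ⟨3, by omega⟩
      have hzt : z ≠ t := by simp [z, t]
      have hxt : x ≠ t := by simp [x, t]
      have hyt : y ≠ t := by simp [y, t]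
      obtain ⟨p, hp, hl, hF⟩ := aux_path (k - 4) {x, y} t z hzt.symm
        (by simp [hxt.symm, hyt.symm]) (by simp [hzx, hzy])
        (by rw [Finset.card_pair hxy]; omega)
      obtain ⟨w, hw, hwl, -⟩ := aux_cycle hzx hzy hxy hyt p hp (hF x (by simp)) (hF y (by simp))
      exact ⟨z, w, hw, by omega⟩
  have hs1 : s = -1 := by
    have e := h a w hw hl
    rw [aux_walk f s g hg w, mul_assoc, Int.units_mul_self, mul_one, hl] at e
    rcases Int.units_eq_one_or s with h1 | h1
    · rw [h1, one_pow] at e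
      exact absurd e (by decide)
    · exact h1
  intro v c _
  rw [aux_walk (fun e => -f e) 1 g (fun a b hab => by simp [hg a b hab, hs1]) c, mul_assoc,
    Int.units_mul_self, one_pow, one_mul]

/-- For odd `k` with `3 ≤ k ≤ n`: `max_σ c_k⁻(K_n, σ) = c_k⁻(-K_n) = c_k(K_n)`, and any
signature that is not antibalanced has strictly fewer negative circles of length `k`. -/
theorem max_negCircCount_odd (n k : ℕ) (hodd : Odd k) (h3 : 3 ≤ k) (hkn : k ≤ n) :
    (∀ σ : Sym2 (Fin n) → ℤˣ,
      negCircCount (⊤ : SimpleGraph (Fin n)) σ k ≤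
        circCount (⊤ : SimpleGraph (Fin n)) k) ∧
    negCircCount (⊤ : SimpleGraph (Fin n)) (fun _ => -1) k =
      circCount (⊤ : SimpleGraph (Fin n)) k ∧
    (∀ σ : Sym2 (Fin n) → ℤˣ, ¬ sgAntibalanced (⊤ : SimpleGraph (Fin n)) σ →
      negCircCount (⊤ : SimpleGraph (Fin n)) σ k <
        circCount (⊤ : SimpleGraph (Fin n)) k) := by
  refine ⟨fun σ => ?_, ?_, fun σ hσ => ?_⟩
  · apply Set.ncard_le_ncard _ (Set.toFinite _)
    rintro C ⟨a, w, hw, hl, -, hC⟩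
    exact ⟨a, w, hw, hl, hC⟩
  · unfold negCircCount circCount
    congr 1
    ext C
    constructor
    · rintro ⟨a, w, hw, hl, -, hC⟩
      exact ⟨a, w, hw, hl, hC⟩
    · rintro ⟨a, w, hw, hl, hC⟩
      refine ⟨a, w, hw, hl, ?_, hC⟩
      simp [walkSign, hl, hodd.neg_one_pow]
  · apply Set.ncard_lt_ncard _ (Set.toFinite _)
    refine ⟨?_, fun hsub => hσ (aux_main hodd h3 hkn σ ?_)⟩
    · rintro C ⟨a, w, hw, hl, -, hC⟩
      exact ⟨a, w, hw, hl, hC⟩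
    · intro a w hw hl
      obtain ⟨a', w', hw', -, hs', hC'⟩ := hsub ⟨a, w, hw, hl, rfl⟩
      rw [aux_sign_eq _ _ w hw, ← hC', ← aux_sign_eq _ _ w' hw', hs']
end
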